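/- Upper bound (recovery sequence) for the periodic spin energy: Let L > 0, σ ∈ (0,1), τ ∈ [0,1], and let (n_m) be a strictly increasing sequence of integers with τ_{n_m} = (⌊L n_m²⌋ − n_m⌊L n_m⌋)/n_m → τ. Let (k_m) be integers with 0 ≤ k_m ≤ ⌊L n_m²⌋ and k_m/(L n_m²) → σ. Let v : ℝ → ℝ satisfy 0 ≤ v(x) ≤ 1 for all x ∈ (0,L), have finite pointwise total variation on (0,L), and ∫_{(0,L)} v dλ = σL, and let a = lim_{x→0⁺} v(x) and b = lim_{x→L⁻} v(x) (these one-sided limits exist). Then there exist u_m ∈ A_{n_m}(L,k_m) whose associated step functions converge weakly-* in L^∞(0,L) to v and such that limsup_{m→∞} F^{#}_{n_m}(u_m) ≤ 2·λ({x ∈ (0,L) : 0 < v(x) < 1}) + Var(v;(0,L)) + φ_τ(a,b). -/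

import Mathlib

open MeasureTheory Filter Set
open scoped ENNReal Classical

noncomputable section

/-- `AdmDisc L n k u` : `u` belongs to `A_n(L,k)`, i.e. `u` takes the values `0,1` on
`{1,…,⌊Ln²⌋}`, exactly `k` of those indices carry the value `1`, and `u` vanishes
outside `{1,…,⌊Ln²⌋}` (extension by `0`). -/
def AdmDisc (L : ℝ) (n k : ℕ) (u : ℕ → ℝ) : Prop :=
  (∀ i ∈ Finset.Icc 1 (Nat.floor (L * (n : ℝ) ^ 2)), u i = 0 ∨ u i = 1) ∧
  (∀ i, i ∉ Finset.Icc 1 (Nat.floor (L * (n : ℝ) ^ 2)) → u i = 0) ∧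
  ((Finset.Icc 1 (Nat.floor (L * (n : ℝ) ^ 2))).filter fun i => u i = 1).card = k

/-- The periodic discrete energy `F_n^#(u) = (1/n)·Σ (u_i − u_j)²`, the sum running over the
(unordered) pairs `{i,j} ⊆ {1,…,⌊Ln²⌋}` with `|i−j| ∈ {1, n, ⌊Ln²⌋−1, ⌊Ln²⌋−n}`. -/
def energyPer (L : ℝ) (n : ℕ) (u : ℕ → ℝ) : ℝ :=
  (1 / (n : ℝ)) *
    ∑ p ∈ (Finset.Icc 1 (Nat.floor (L * (n : ℝ) ^ 2)) ×ˢ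
        Finset.Icc 1 (Nat.floor (L * (n : ℝ) ^ 2))).filter
        (fun p => p.1 < p.2 ∧ (p.2 - p.1 = 1 ∨ p.2 - p.1 = n ∨
          p.2 - p.1 = Nat.floor (L * (n : ℝ) ^ 2) - 1 ∨
          p.2 - p.1 = Nat.floor (L * (n : ℝ) ^ 2) - n)),
      (u p.1 - u p.2) ^ 2

/-- The step function associated with a discrete spin function: `x ↦ u_i` for
`x ∈ ((i−1)/n², i/n²]`. -/
def stepFun (n : ℕ) (u : ℕ → ℝ) : ℝ → ℝ := fun x => u (⌈(n : ℝ) ^ 2 * x⌉.toNat)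

/-- Weak-* convergence in `L^∞(I)`: `∫_I v_n g → ∫_I w g` for every integrable `g` on `I`. -/
def WeakStarTo (I : Set ℝ) (v : ℕ → ℝ → ℝ) (w : ℝ → ℝ) : Prop :=
  ∀ g : ℝ → ℝ, IntegrableOn g I volume →
    Tendsto (fun n => ∫ x in I, v n x * g x) atTop (nhds (∫ x in I, w x * g x))

/-- The periodicity-defect sequence `τ_n = (⌊Ln²⌋ − n·⌊Ln⌋)/n`. -/
def tauSeq (L : ℝ) (n : ℕ) : ℝ :=
  ((Nat.floor (L * (n : ℝ) ^ 2) : ℝ) - (n : ℝ) * (Nat.floor (L * (n : ℝ)) : ℝ)) / n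

/-- The boundary term `φ_τ(x,y) = λ( [0,1] ∩ ( ([−τ,x−τ] ∪ [1−τ,x+1−τ]) Δ [0,y] ) )`. -/
def phi (τ x y : ℝ) : ℝ :=
  (volume (Set.Icc (0 : ℝ) 1 ∩
    symmDiff (Set.Icc (-τ) (x - τ) ∪ Set.Icc (1 - τ) (x + 1 - τ)) (Set.Icc 0 y))).toReal


lemma sum_range_rows (f : ℕ → ℝ) (n R t : ℕ) :
    ∑ i ∈ Finset.range (n * R + t), f i =
      ∑ r ∈ Finset.range R, ∑ c ∈ Finset.range n, f (n * r + c) +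
        ∑ c ∈ Finset.range t, f (n * R + c) := by
  rw [Finset.sum_range_add]
  congr 1
  induction R with
  | zero => simp
  | succ R ih => rw [Nat.mul_succ, Finset.sum_range_add, ih, Finset.sum_range_succ]

def FF (n : ℕ) (w : ℕ → ℕ) (j : ℕ) : ℝ := if n ≤ j % n + w (j / n) then 1 else 0

def UU (n N : ℕ) (w : ℕ → ℕ) (i : ℕ) : ℝ := if 1 ≤ i ∧ i ≤ N then FF n w (i - 1) else 0

lemma FF_row {n : ℕ} (w : ℕ → ℕ) (r : ℕ) {c : ℕ} (hc : c < n) :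
    FF n w (n * r + c) = if n ≤ c + w r then 1 else 0 := by
  unfold FF
  have h1 : (n * r + c) % n = c := by
    rw [Nat.mul_add_mod, Nat.mod_eq_of_lt hc]
  have h2 : (n * r + c) / n = r := by
    rw [Nat.mul_add_div (by omega), Nat.div_eq_of_lt hc, add_zero]
  rw [h1, h2]

lemma FF_01 (n : ℕ) (w : ℕ → ℕ) (j : ℕ) : FF n w j = 0 ∨ FF n w j = 1 := by
  unfold FF; split_ifs <;> simp

lemma UU_succ {n N : ℕ} (w : ℕ → ℕ) {j : ℕ} (hj : j < N) : UU n N w (j + 1) = FF n w j := by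
  unfold UU; rw [if_pos ⟨by omega, by omega⟩]; simp

lemma row_count (n w t : ℕ) :
    ∑ c ∈ Finset.range t, (if n ≤ c + w then (1:ℝ) else 0) = ((min t (w + t - n) : ℕ) : ℝ) := by
  induction t with
  | zero => simp
  | succ t ih =>
    rw [Finset.sum_range_succ, ih]
    split_ifs with h
    · have : min (t+1) (w + (t+1) - n) = min t (w + t - n) + 1 := by omega
      rw [this]; push_cast; rfl
    · have : min (t+1) (w + (t+1) - n) = min t (w + t - n) := by omega
      rw [this]; simp

lemma UU_count {n N R t k : ℕ} (w : ℕ → ℕ) (hN : N = n * R + t) (ht : t < n)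
    (hw : ∀ r ≤ R, w r ≤ n)
    (hk : ∑ r ∈ Finset.range R, w r + (w R + t - n) = k) :
    ((Finset.Icc 1 N).filter fun i => UU n N w i = 1).card = k := by
  have h1 : (((Finset.Icc 1 N).filter fun i => UU n N w i = 1).card : ℝ)
      = ∑ i ∈ Finset.Icc 1 N, UU n N w i := by
    rw [Finset.card_filter]
    push_cast
    apply Finset.sum_congr rfl
    intro i hi
    rw [Finset.mem_Icc] at hi
    unfold UU
    rw [if_pos hi]
    rcases FF_01 n w (i-1) with h | h <;> simp [h]
  have h2 : ∑ i ∈ Finset.Icc 1 N, UU n N w i = ∑ j ∈ Finset.range N, FF n w j := by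
    rw [← Finset.sum_congr rfl (fun j hj => UU_succ w (Finset.mem_range.1 hj)), Finset.range_eq_Ico,
      Finset.sum_Ico_add' (fun i => UU n N w i) 0 N 1]
    rfl
  have h3 : ∑ j ∈ Finset.range N, FF n w j = (k : ℝ) := by
    rw [hN, sum_range_rows, ← hk]
    push_cast
    congr 1
    · apply Finset.sum_congr rfl
      intro r hr
      rw [Finset.sum_congr rfl (fun c hc => FF_row w r (Finset.mem_range.1 hc)), row_count]
      have := hw r (Finset.mem_range.1 hr).le
      congr 1; omega
    · rw [Finset.sum_congr rfl (fun c hc => FF_row w R ((Finset.mem_range.1 hc).trans ht)), row_count]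
      have := hw R le_rfl
      congr 1; omega
  have := h1.trans (h2.trans h3)
  exact_mod_cast this

lemma FF_sq_le (n : ℕ) (w : ℕ → ℕ) (i j : ℕ) : (FF n w i - FF n w j)^2 ≤ 1 := by
  rcases FF_01 n w i with h | h <;> rcases FF_01 n w j with h' | h' <;> rw [h, h'] <;> norm_num

lemma pair_sum (N d : ℕ) (u : ℕ → ℝ) (hd : 0 < d) (hdN : d ≤ N) :
    ∑ p ∈ Finset.Icc 1 N ×ˢ Finset.Icc 1 N,
      (if p.1 < p.2 ∧ p.2 - p.1 = d then (u p.1 - u p.2)^2 else 0) =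
    ∑ j ∈ Finset.range (N - d), (u (j+1) - u (j+1+d))^2 := by
  rw [← Finset.sum_filter]
  symm
  apply Finset.sum_nbij' (fun j => (j+1, j+1+d)) (fun p => p.1 - 1)
  · intro j hj
    simp only [Finset.mem_range, Finset.mem_filter, Finset.mem_product, Finset.mem_Icc] at *
    omega
  · rintro ⟨p, q⟩ hj
    simp only [Finset.mem_range, Finset.mem_filter, Finset.mem_product, Finset.mem_Icc] at *
    omega
  · intro j hj
    simp
  · rintro ⟨p, q⟩ hj
    simp only [Finset.mem_filter, Finset.mem_product, Finset.mem_Icc] at *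
    ext <;> simp <;> omega
  · intro j hj
    rfl

lemma energy_split (N n : ℕ) (u : ℕ → ℝ) (hn : 0 < n) (hnN : n < N) :
    ∑ p ∈ (Finset.Icc 1 N ×ˢ Finset.Icc 1 N).filter
        (fun p => p.1 < p.2 ∧ (p.2 - p.1 = 1 ∨ p.2 - p.1 = n ∨
          p.2 - p.1 = N - 1 ∨ p.2 - p.1 = N - n)), (u p.1 - u p.2) ^ 2 ≤
    ∑ j ∈ Finset.range (N - 1), (u (j+1) - u (j+1+1))^2 +
    ∑ j ∈ Finset.range (N - n), (u (j+1) - u (j+1+n))^2 +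
    ∑ j ∈ Finset.range (N - (N-1)), (u (j+1) - u (j+1+(N-1)))^2 +
    ∑ j ∈ Finset.range (N - (N-n)), (u (j+1) - u (j+1+(N-n)))^2 := by
  rw [← pair_sum N 1 u (by omega) (by omega), ← pair_sum N n u (by omega) (by omega),
    ← pair_sum N (N-1) u (by omega) (by omega), ← pair_sum N (N-n) u (by omega) (by omega),
    ← Finset.sum_add_distrib, ← Finset.sum_add_distrib, ← Finset.sum_add_distrib,
    Finset.sum_filter]
  apply Finset.sum_le_sum
  rintro ⟨p, q⟩ -
  have := sq_nonneg (u p - u q)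
  have hi : ∀ (P : Prop) [Decidable P], (0:ℝ) ≤ (if P then (u p - u q)^2 else 0) := by
    intro P _; split_ifs <;> simp [this]
  simp only
  by_cases hpq : p < q
  · simp only [hpq, true_and]
    by_cases h1 : q - p = 1
    · rw [if_pos (Or.inl h1), if_pos h1]
      linarith [hi (q - p = n), hi (q - p = N - 1), hi (q - p = N - n)]
    by_cases h2 : q - p = n
    · rw [if_pos (Or.inr (Or.inl h2)), if_pos h2]
      linarith [hi (q - p = 1), hi (q - p = N - 1), hi (q - p = N - n)]
    by_cases h3 : q - p = N - 1
    · rw [if_pos (Or.inr (Or.inr (Or.inl h3))), if_pos h3]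
      linarith [hi (q - p = 1), hi (q - p = n), hi (q - p = N - n)]
    by_cases h4 : q - p = N - n
    · rw [if_pos (Or.inr (Or.inr (Or.inr h4))), if_pos h4]
      linarith [hi (q - p = 1), hi (q - p = n), hi (q - p = N - 1)]
    simp [h1, h2, h3, h4]
  · simp [hpq]

lemma row_diff (n : ℕ) {w w' : ℕ} (hw : w ≤ n) (hw' : w' ≤ n) :
    ∑ c ∈ Finset.range n, ((if n ≤ c + w then (1:ℝ) else 0) - (if n ≤ c + w' then 1 else 0))^2
      = |(w' : ℝ) - w| := by
  wlog h : w ≤ w' generalizing w w'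
  · rw [abs_sub_comm, ← this hw' hw (by omega)]
    apply Finset.sum_congr rfl; intros; ring
  have h1 := row_count n w n
  have h2 := row_count n w' n
  have e1 : min n (w + n - n) = w := by omega
  have e2 : min n (w' + n - n) = w' := by omega
  rw [e1] at h1; rw [e2] at h2
  rw [abs_of_nonneg (by simpa using h), ← h1, ← h2, ← Finset.sum_sub_distrib]
  apply Finset.sum_congr rfl
  intro c _
  split_ifs with a b <;> first | omega | norm_num

lemma row_int (n w m : ℕ) (hm : m + 1 ≤ n) :
    ∑ c ∈ Finset.range m, ((if n ≤ c + w then (1:ℝ) else 0) - (if n ≤ c + 1 + w then 1 else 0))^2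
      ≤ if 0 < w ∧ w < n then 1 else 0 := by
  have key : ∑ c ∈ Finset.range m, ((if n ≤ c + w then (1:ℝ) else 0) - (if n ≤ c + 1 + w then 1 else 0))^2
      = ∑ c ∈ Finset.range m, ((if n ≤ (c+1) + w then (1:ℝ) else 0) - (if n ≤ c + w then 1 else 0)) := by
    apply Finset.sum_congr rfl
    intro c _
    split_ifs <;> first | omega | norm_num
  rw [key, Finset.sum_range_sub (fun c => if n ≤ c + w then (1:ℝ) else 0)]
  split_ifs <;> first | omega | norm_num

lemma A1_row (n : ℕ) (hn : 0 < n) (w : ℕ → ℕ) (r : ℕ) (h0 : w r ≤ n) (h1 : w (r+1) ≤ n) :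
    ∑ c ∈ Finset.range n, (FF n w (n * r + c) - FF n w (n * r + c + 1))^2 ≤
      2 * (if 0 < w r ∧ w r < n then (1:ℝ) else 0) +
        ((if w r = n then (1:ℝ) else 0) - (if w (r+1) = n then 1 else 0)) +
        2 / n * |(w (r+1) : ℝ) - w r| := by
  obtain ⟨m, rfl⟩ : ∃ m, n = m + 1 := ⟨n - 1, by omega⟩
  rw [Finset.sum_range_succ]
  have hA : ∑ c ∈ Finset.range m, (FF (m+1) w ((m+1) * r + c) - FF (m+1) w ((m+1) * r + c + 1))^2
      ≤ if 0 < w r ∧ w r < m+1 then 1 else 0 := by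
    refine le_trans (le_of_eq ?_) (row_int (m+1) (w r) m le_rfl)
    apply Finset.sum_congr rfl
    intro c hc
    rw [Finset.mem_range] at hc
    rw [FF_row w r (by omega : c < m+1), add_assoc, FF_row w r (by omega : c + 1 < m+1)]
  have hB : (FF (m+1) w ((m+1) * r + m) - FF (m+1) w ((m+1) * r + m + 1))^2 ≤
      (if 0 < w r ∧ w r < m+1 then (1:ℝ) else 0) +
        ((if w r = m+1 then (1:ℝ) else 0) - (if w (r+1) = m+1 then 1 else 0)) +
        2 / ((m+1 : ℕ):ℝ) * |(w (r+1) : ℝ) - w r| := by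
    have e : (m+1) * r + m + 1 = (m+1) * (r+1) + 0 := by ring
    rw [e, FF_row w r (by omega : m < m+1), FF_row w (r+1) (by omega : 0 < m+1)]
    have hpos : 0 ≤ 2 / ((m+1 : ℕ):ℝ) * |(w (r+1) : ℝ) - w r| := by positivity
    by_cases hx : w r = 0 ∧ w (r+1) = m+1
    · have : 2 / ((m+1 : ℕ):ℝ) * |(w (r+1) : ℝ) - w r| = 2 := by
        rw [hx.1, hx.2]
        simp only [Nat.cast_zero, sub_zero, Nat.abs_cast]
        field_simp
      rw [this]
      simp [hx.1, hx.2]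
      norm_num
    · split_ifs <;> first | omega | linarith
  linarith

def Bterm (n t w0 W1 W2 d : ℕ) : ℝ :=
  if d < n - t then ((if d + t < w0 then (1:ℝ) else 0) - (if d < W1 then 1 else 0))^2
  else ((if d + t - n < w0 then (1:ℝ) else 0) - (if d < W2 then 1 else 0))^2

lemma B_eq (n R t : ℕ) (ht : t < n) (w : ℕ → ℕ) :
    ∑ j ∈ Finset.range n, (FF n w j - FF n w (n * R + t + j))^2 =
      ∑ d ∈ Finset.range n, Bterm n t (w 0) (w R) (w (R+1)) d := by
  have hsplit : n = (n - t) + t := by omega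
  have e0 : ∀ f : ℕ → ℝ, ∑ j ∈ Finset.range n, f j =
      ∑ j ∈ Finset.range (n - t), f j + ∑ j ∈ Finset.range t, f (n - t + j) := by
    intro f
    conv_lhs => rw [hsplit]
    rw [Finset.sum_range_add]
  rw [e0, e0]
  congr 1
  · rw [← Finset.sum_range_reflect]
    apply Finset.sum_congr rfl
    intro d hd
    rw [Finset.mem_range] at hd
    have a1 : FF n w (n - t - 1 - d) = if d + t < w 0 then 1 else 0 := by
      have := FF_row w 0 (by omega : n - t - 1 - d < n)
      rw [mul_zero, zero_add] at this
      rw [this]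
      split_ifs <;> first | omega | rfl
    have a2 : FF n w (n * R + t + (n - t - 1 - d)) = if d < w R then 1 else 0 := by
      rw [add_assoc, FF_row w R (by omega : t + (n - t - 1 - d) < n)]
      split_ifs <;> first | omega | rfl
    rw [a1, a2, Bterm, if_pos hd]
  · rw [← Finset.sum_range_reflect]
    apply Finset.sum_congr rfl
    intro d hd
    rw [Finset.mem_range] at hd
    have a1 : FF n w (n - t + (t - 1 - d)) = if d < w 0 then 1 else 0 := by
      have := FF_row w 0 (by omega : n - t + (t - 1 - d) < n)
      rw [mul_zero, zero_add] at this
      rw [this]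
      split_ifs <;> first | omega | rfl
    have a2 : FF n w (n * R + t + (n - t + (t - 1 - d))) = if n - t + d < w (R+1) then 1 else 0 := by
      have e : n * R + t + (n - t + (t - 1 - d)) = n * (R+1) + (t - 1 - d) := by
        rw [Nat.mul_succ]; omega
      rw [e, FF_row w (R+1) (by omega : t - 1 - d < n)]
      split_ifs <;> first | omega | rfl
    rw [a1, a2, Bterm, if_neg (by omega : ¬ (n - t + d < n - t))]
    have e : n - t + d + t - n = d := by omega
    rw [e]

lemma energy_det (n R t : ℕ) (ht : t < n) (w : ℕ → ℕ) (hw : ∀ r ≤ R + 1, w r ≤ n)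
    (N : ℕ) (hN : N = n * (R + 1) + t) (hnN : n < N) :
    ∑ p ∈ (Finset.Icc 1 N ×ˢ Finset.Icc 1 N).filter
        (fun p => p.1 < p.2 ∧ (p.2 - p.1 = 1 ∨ p.2 - p.1 = n ∨
          p.2 - p.1 = N - 1 ∨ p.2 - p.1 = N - n)), (UU n N w p.1 - UU n N w p.2) ^ 2 ≤
    2 * (((Finset.range (R+1)).filter fun r => 0 < w r ∧ w r < n).card : ℝ) +
      (1 + 2 / n) * ∑ r ∈ Finset.range (R+1), |(w (r+1) : ℝ) - w r| + 3 +
      ∑ d ∈ Finset.range n, Bterm n t (w 0) (w R) (w (R+1)) d := by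
  have hn : 0 < n := by omega
  refine (energy_split N n _ hn hnN).trans ?_
  have hA : ∑ j ∈ Finset.range (N - 1), (UU n N w (j+1) - UU n N w (j+1+1))^2 ≤
      2 * (((Finset.range (R+1)).filter fun r => 0 < w r ∧ w r < n).card : ℝ) +
      2 / n * ∑ r ∈ Finset.range (R+1), |(w (r+1) : ℝ) - w r| + 2 := by
    have h1 : ∑ j ∈ Finset.range (N - 1), (UU n N w (j+1) - UU n N w (j+1+1))^2 =
        ∑ j ∈ Finset.range (N - 1), (FF n w j - FF n w (j+1))^2 := by
      apply Finset.sum_congr rfl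
      intro j hj
      rw [Finset.mem_range] at hj
      rw [UU_succ w (by omega), UU_succ w (by omega)]
    have h2 : ∑ j ∈ Finset.range (N - 1), (FF n w j - FF n w (j+1))^2 ≤
        ∑ j ∈ Finset.range (n * (R+1) + (n - 1)), (FF n w j - FF n w (j+1))^2 := by
      apply Finset.sum_le_sum_of_subset_of_nonneg
      · intro j; simp only [Finset.mem_range]; omega
      · intros; positivity
    rw [h1]
    refine h2.trans ?_
    rw [sum_range_rows (fun j => (FF n w j - FF n w (j+1))^2)]
    have h3 : ∑ c ∈ Finset.range (n - 1), (FF n w (n * (R+1) + c) - FF n w (n * (R+1) + c + 1))^2 ≤ 1 := by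
      have := row_int n (w (R+1)) (n-1) (by omega)
      refine le_trans (le_of_eq ?_) (this.trans (by split_ifs <;> norm_num))
      apply Finset.sum_congr rfl
      intro c hc
      rw [Finset.mem_range] at hc
      rw [FF_row w (R+1) (by omega : c < n), add_assoc, FF_row w (R+1) (by omega : c + 1 < n)]
    have h4 := Finset.sum_le_sum (fun r (hr : r ∈ Finset.range (R+1)) =>
      A1_row n hn w r (hw r (by rw [Finset.mem_range] at hr; omega))
        (hw (r+1) (by rw [Finset.mem_range] at hr; omega)))
    rw [Finset.sum_add_distrib, Finset.sum_add_distrib, ← Finset.mul_sum, ← Finset.mul_sum,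
      Finset.sum_range_sub' (fun r => if w r = n then (1:ℝ) else 0), Finset.sum_boole] at h4
    have h5 : (if w 0 = n then (1:ℝ) else 0) - (if w (R+1) = n then (1:ℝ) else 0) ≤ 1 := by
      split_ifs <;> norm_num
    linarith
  have hB : ∑ j ∈ Finset.range (N - n), (UU n N w (j+1) - UU n N w (j+1+n))^2 ≤
      ∑ r ∈ Finset.range (R+1), |(w (r+1) : ℝ) - w r| := by
    have h1 : ∑ j ∈ Finset.range (N - n), (UU n N w (j+1) - UU n N w (j+1+n))^2 =
        ∑ j ∈ Finset.range (N - n), (FF n w j - FF n w (j+n))^2 := by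
      apply Finset.sum_congr rfl
      intro j hj
      rw [Finset.mem_range] at hj
      rw [UU_succ w (by omega), show j + 1 + n = (j + n) + 1 by ring, UU_succ w (by omega)]
    have h2 : ∑ j ∈ Finset.range (N - n), (FF n w j - FF n w (j+n))^2 ≤
        ∑ j ∈ Finset.range (n * (R+1) + 0), (FF n w j - FF n w (j+n))^2 := by
      apply Finset.sum_le_sum_of_subset_of_nonneg
      · intro j; simp only [Finset.mem_range]; omega
      · intros; positivity
    rw [h1]
    refine h2.trans (le_of_eq ?_)
    rw [sum_range_rows (fun j => (FF n w j - FF n w (j+n))^2)]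
    simp only [Finset.range_zero, Finset.sum_empty, add_zero]
    apply Finset.sum_congr rfl
    intro r hr
    rw [Finset.mem_range] at hr
    rw [← row_diff n (hw r (by omega)) (hw (r+1) (by omega))]
    apply Finset.sum_congr rfl
    intro c hc
    rw [Finset.mem_range] at hc
    rw [FF_row w r hc, show n * r + c + n = n * (r+1) + c by ring, FF_row w (r+1) hc]
  have hC : ∑ j ∈ Finset.range (N - (N-1)), (UU n N w (j+1) - UU n N w (j+1+(N-1)))^2 ≤ 1 := by
    have e : N - (N - 1) = 1 := by omega
    rw [e, Finset.sum_range_one, UU_succ w (by omega), show 0 + 1 + (N-1) = (N-1)+1 by omega,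
      UU_succ w (by omega)]
    exact FF_sq_le _ _ _ _
  have hD : ∑ j ∈ Finset.range (N - (N-n)), (UU n N w (j+1) - UU n N w (j+1+(N-n)))^2 =
      ∑ d ∈ Finset.range n, Bterm n t (w 0) (w R) (w (R+1)) d := by
    rw [← B_eq n R t ht w, show N - (N - n) = n by omega]
    apply Finset.sum_congr rfl
    intro j hj
    rw [Finset.mem_range] at hj
    have e : j + 1 + (N - n) = (n * R + t + j) + 1 := by
      rw [hN, Nat.mul_succ]; omega
    have e2 : n * R + t + j < N := by rw [hN, Nat.mul_succ]; omega
    rw [e, UU_succ w (by omega), UU_succ w e2]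
  rw [hD]
  linarith


def rnd (y : ℕ → ℝ) : ℕ → ℕ
  | 0 => ⌊y 0⌋₊
  | r + 1 => if (rnd y r : ℝ) ≤ y (r+1) then ⌊y (r+1)⌋₊ else ⌈y (r+1)⌉₊

lemma rnd_or (y : ℕ → ℝ) (r : ℕ) : rnd y r = ⌊y r⌋₊ ∨ rnd y r = ⌈y r⌉₊ := by
  cases r with
  | zero => left; rfl
  | succ r =>
    rw [rnd]
    split_ifs
    · left; rfl
    · right; rfl

lemma rnd_near (y : ℕ → ℝ) (r : ℕ) (hy : 0 ≤ y r) : |y r - rnd y r| ≤ 1 := by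
  have h1 := Nat.floor_le hy
  have h2 := Nat.lt_floor_add_one (y r)
  have h3 := Nat.le_ceil (y r)
  have h4 := Nat.ceil_lt_add_one hy
  rcases rnd_or y r with h | h <;> rw [h, abs_le] <;> constructor <;> linarith

lemma rnd_nat (y : ℕ → ℝ) (r k : ℕ) (hy : y r = k) : rnd y r = k := by
  rcases rnd_or y r with h | h <;> rw [h, hy] <;> simp

lemma rnd_le (y : ℕ → ℝ) (r k : ℕ) (hy : y r ≤ k) : rnd y r ≤ k := by
  rcases rnd_or y r with h | h <;> rw [h]
  · exact Nat.floor_le_of_le hy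
  · exact Nat.ceil_le.2 hy

lemma rnd_step (y : ℕ → ℝ) (r : ℕ) (hy' : 0 ≤ y (r+1)) :
    |(rnd y (r+1) : ℝ) - rnd y r| ≤ |y (r+1) - y r| + |y r - rnd y r| - |y (r+1) - rnd y (r+1)| := by
  have key : |(rnd y (r+1) : ℝ) - rnd y r| + |y (r+1) - rnd y (r+1)| = |y (r+1) - rnd y r| := by
    by_cases h : (rnd y r : ℝ) ≤ y (r+1)
    · have e : rnd y (r+1) = ⌊y (r+1)⌋₊ := by rw [rnd, if_pos h]
      have h1 := Nat.floor_le hy'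
      have h2 : rnd y r ≤ ⌊y (r+1)⌋₊ := Nat.le_floor h
      have h2' : (rnd y r : ℝ) ≤ ⌊y (r+1)⌋₊ := by exact_mod_cast h2
      rw [e, abs_of_nonneg (by linarith), abs_of_nonneg (by linarith), abs_of_nonneg (by linarith)]
      ring
    · have e : rnd y (r+1) = ⌈y (r+1)⌉₊ := by rw [rnd, if_neg h]
      push Not at h
      have h1 := Nat.le_ceil (y (r+1))
      have h2 : ⌈y (r+1)⌉₊ ≤ rnd y r := Nat.ceil_le.2 h.le
      have h2' : (⌈y (r+1)⌉₊ : ℝ) ≤ rnd y r := by exact_mod_cast h2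
      rw [e, abs_of_nonpos (by linarith), abs_of_nonpos (by linarith), abs_of_nonpos (by linarith)]
      ring
  have tri : |y (r+1) - rnd y r| ≤ |y (r+1) - y r| + |y r - rnd y r| := by
    have := abs_add_le (y (r+1) - y r) (y r - rnd y r)
    simpa using this
  linarith

lemma nat_ivt (c : ℕ → ℕ) (hstep : ∀ x, c (x+1) ≤ c x + 1) {p q T : ℕ} (hpq : p ≤ q)
    (h0 : c p ≤ T) (h1 : T ≤ c q) : ∃ x, p ≤ x ∧ x ≤ q ∧ c x = T := by
  induction q, hpq using Nat.le_induction with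
  | base => exact ⟨p, le_rfl, le_rfl, by omega⟩
  | succ q hq ih =>
    by_cases h : T ≤ c q
    · obtain ⟨x, a, b, e⟩ := ih h
      exact ⟨x, a, by omega, e⟩
    · have := hstep q
      exact ⟨q+1, by omega, le_rfl, by omega⟩

def cnt (n R t : ℕ) (w : ℕ → ℕ) : ℕ := ∑ r ∈ Finset.range R, w r + (w R + t - n)

lemma mix_exists (n R t k : ℕ) (w0 w1 : ℕ → ℕ)
    (h0 : cnt n R t w0 ≤ k) (h1 : k ≤ cnt n R t w1) :
    ∃ s x, min (w0 s) (w1 s) ≤ x ∧ x ≤ max (w0 s) (w1 s) ∧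
      cnt n R t (fun r => if r < s then w1 r else if r = s then x else w0 r) = k := by
  set c : ℕ → ℕ → ℕ := fun r x => if r < R then x else x + t - n with hc
  have hcnt : ∀ w, cnt n R t w = ∑ r ∈ Finset.range (R+1), c r (w r) := by
    intro w
    rw [Finset.sum_range_succ, cnt]
    congr 1
    · apply Finset.sum_congr rfl
      intro r hr
      simp only [hc, if_pos (Finset.mem_range.1 hr)]
    · simp [hc]
  have cstep : ∀ r x, c r (x+1) ≤ c r x + 1 := by
    intro r x; simp only [hc]; split_ifs <;> omega
  have cmono : ∀ r x y, x ≤ y → c r x ≤ c r y := by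
    intro r x y h; simp only [hc]; split_ifs <;> omega
  set T : ℕ → ℕ := fun s => ∑ r ∈ Finset.range (R+1), c r (if r < s then w1 r else w0 r) with hT
  have hT0 : T 0 ≤ k := by simpa [hT, ← hcnt] using h0
  have hT1 : k ≤ T (R+1) := by
    rw [hcnt] at h1
    refine h1.trans (le_of_eq ?_)
    apply Finset.sum_congr rfl
    intro r hr
    rw [if_pos (Finset.mem_range.1 hr)]
  have hex : ∃ s ≤ R, T s ≤ k ∧ k ≤ T (s+1) := by
    by_contra hcon
    push Not at hcon
    have : ∀ s ≤ R + 1, T s ≤ k := by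
      intro s
      induction s with
      | zero => intro _; exact hT0
      | succ s ih => intro hs; exact (hcon s (by omega) (ih (by omega))).le
    have h2 := hcon R le_rfl (this R (by omega))
    omega
  obtain ⟨s, hs, hs0, hs1⟩ := hex
  set Q : ℕ := ∑ r ∈ (Finset.range (R+1)).erase s, c r (if r < s then w1 r else w0 r) with hQ
  have hmem : s ∈ Finset.range (R+1) := Finset.mem_range.2 (by omega)
  have d0 : T s = c s (w0 s) + Q := by
    rw [hT]; simp only
    rw [← Finset.add_sum_erase _ _ hmem]
    simp [hQ]
  have d1 : T (s+1) = c s (w1 s) + Q := by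
    rw [hT]; simp only
    rw [← Finset.add_sum_erase _ _ hmem]
    simp only [Nat.lt_succ_self, if_true, hQ]
    congr 1
    apply Finset.sum_congr rfl
    intro r hr
    have := Finset.ne_of_mem_erase hr
    by_cases h : r < s
    · rw [if_pos h, if_pos (by omega)]
    · rw [if_neg h, if_neg (by omega)]
  have dx : ∀ x, cnt n R t (fun r => if r < s then w1 r else if r = s then x else w0 r) = c s x + Q := by
    intro x
    rw [hcnt, ← Finset.add_sum_erase _ _ hmem]
    simp only [lt_irrefl, if_false, if_true, hQ]
    congr 1
    apply Finset.sum_congr rfl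
    intro r hr
    have := Finset.ne_of_mem_erase hr
    rw [if_neg this]
  rcases le_total (w0 s) (w1 s) with h | h
  · obtain ⟨x, a, b, e⟩ := nat_ivt (c s) (cstep s) h (T := k - Q) (by omega) (by omega)
    exact ⟨s, x, by omega, by omega, by rw [dx, e]; omega⟩
  · have := cmono s _ _ h
    exact ⟨s, w0 s, by omega, by omega, by rw [dx]; omega⟩

lemma mix_lemma (n R t k : ℕ) (w0 w1 : ℕ → ℕ) (e0 e1 δ : ℕ → ℝ) (D : ℝ)
    (h0 : cnt n R t w0 ≤ k) (h1 : k ≤ cnt n R t w1)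
    (s0 : ∀ r, |(w0 (r+1) : ℝ) - w0 r| ≤ δ r + e0 r - e0 (r+1))
    (s1 : ∀ r, |(w1 (r+1) : ℝ) - w1 r| ≤ δ r + e1 r - e1 (r+1))
    (he0 : ∀ r, 0 ≤ e0 r ∧ e0 r ≤ 1) (he1 : ∀ r, 0 ≤ e1 r ∧ e1 r ≤ 1)
    (hD : ∀ r, |(w1 r : ℝ) - w0 r| ≤ D) :
    ∃ w : ℕ → ℕ, cnt n R t w = k ∧
      (∀ r, min (w0 r) (w1 r) ≤ w r ∧ w r ≤ max (w0 r) (w1 r)) ∧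
      ∑ r ∈ Finset.range R, |(w (r+1) : ℝ) - w r| ≤ ∑ r ∈ Finset.range R, δ r + 2 + 2 * D := by
  obtain ⟨s, x, hx0, hx1, hcnt⟩ := mix_exists n R t k w0 w1 h0 h1
  refine ⟨_, hcnt, ?_, ?_⟩
  · intro r
    split_ifs with a b
    · omega
    · subst b; omega
    · omega
  · set w : ℕ → ℕ := fun r => if r < s then w1 r else if r = s then x else w0 r with hw
    have hD0 : 0 ≤ D := (abs_nonneg _).trans (hD 0)
    have hxD : |(x : ℝ) - w0 s| ≤ D ∧ |(x : ℝ) - w1 s| ≤ D := by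
      have := hD s
      have hx0' : min (w0 s : ℝ) (w1 s) ≤ x := by exact_mod_cast hx0
      have hx1' : (x : ℝ) ≤ max (w0 s : ℝ) (w1 s) := by exact_mod_cast hx1
      rw [abs_le] at *
      rcases le_total (w0 s : ℝ) (w1 s) with h | h
      · rw [min_eq_left h] at hx0'; rw [max_eq_right h] at hx1'
        rw [abs_le]; refine ⟨⟨?_, ?_⟩, ?_, ?_⟩ <;> linarith
      · rw [min_eq_right h] at hx0'; rw [max_eq_left h] at hx1'
        rw [abs_le]; refine ⟨⟨?_, ?_⟩, ?_, ?_⟩ <;> linarith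
    set pot : ℕ → ℝ := fun r => if r < s then e1 r + 1 + 2 * D else if r = s then e0 r + D else e0 r
      with hpot
    have hstep : ∀ r ∈ Finset.range R, |(w (r+1) : ℝ) - w r| ≤ δ r + (pot r - pot (r+1)) := by
      intro r _
      have a0 := s0 r
      have a1 := s1 r
      rcases lt_trichotomy (r+1) s with h | h | h
      · have e : w (r+1) = w1 (r+1) := by simp [hw, h]
        have e' : w r = w1 r := by simp [hw, (by omega : r < s)]
        have p : pot r = e1 r + 1 + 2 * D := by simp [hpot, (by omega : r < s)]
        have p' : pot (r+1) = e1 (r+1) + 1 + 2 * D := by simp [hpot, h]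
        rw [e, e', p, p']; linarith
      · have e : w (r+1) = x := by simp [hw, h]
        have e' : w r = w1 r := by simp [hw, (by omega : r < s)]
        have p : pot r = e1 r + 1 + 2 * D := by simp [hpot, (by omega : r < s)]
        have p' : pot (r+1) = e0 (r+1) + D := by simp [hpot, h]
        rw [e, e', p, p']
        have := hxD.2
        rw [← h] at this
        have tri := abs_add_le ((x:ℝ) - w1 (r+1)) ((w1 (r+1) : ℝ) - w1 r)
        rw [sub_add_sub_cancel] at tri
        have := (he0 (r+1)).2
        have := (he1 (r+1)).1
        linarith
      · have p' : pot (r+1) = e0 (r+1) := by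
          rw [hpot]; simp only
          rw [if_neg (by omega), if_neg (by omega)]
        have e : w (r+1) = w0 (r+1) := by
          rw [hw]; simp only
          rw [if_neg (by omega), if_neg (by omega)]
        by_cases hr : r = s
        · have e' : w r = x := by simp [hw, hr]
          have p : pot r = e0 r + D := by simp [hpot, hr]
          rw [e, e', p, p']
          have := hxD.1
          rw [← hr, abs_sub_comm] at this
          have tri := abs_add_le ((w0 (r+1) : ℝ) - w0 r) ((w0 r : ℝ) - x)
          rw [sub_add_sub_cancel] at tri
          linarith
        · have e' : w r = w0 r := by
            rw [hw]; simp only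
            rw [if_neg (by omega), if_neg (by omega)]
          have p : pot r = e0 r := by
            rw [hpot]; simp only
            rw [if_neg (by omega), if_neg (by omega)]
          rw [e, e', p, p']; linarith
    have := Finset.sum_le_sum hstep
    rw [Finset.sum_add_distrib, Finset.sum_range_sub'] at this
    have p0 : pot 0 ≤ 2 + 2 * D := by
      have := (he0 0).2
      have := (he1 0).2
      simp only [hpot]; split_ifs <;> linarith
    have pR : 0 ≤ pot R := by
      have := (he0 R).1
      have := (he1 R).1
      simp only [hpot]; split_ifs <;> linarith
    linarith

lemma var_update (R j x n : ℕ) (w : ℕ → ℕ) (hj : j + 2 ≤ R) (h0 : w (j+1) = 0) (hx : x ≤ n)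
    (hn : w j = n ∨ w (j+2) = n) (hle0 : w j ≤ n) (hle2 : w (j+2) ≤ n) :
    ∑ r ∈ Finset.range R, |(Function.update w (j+1) x (r+1) : ℝ) - (Function.update w (j+1) x r : ℕ)| ≤
      ∑ r ∈ Finset.range R, |(w (r+1) : ℝ) - w r| := by
  have m1 : j ∈ Finset.range R := Finset.mem_range.2 (by omega)
  have m2 : j + 1 ∈ (Finset.range R).erase j := by
    rw [Finset.mem_erase, Finset.mem_range]; omega
  rw [← Finset.add_sum_erase _ _ m1, ← Finset.add_sum_erase _ _ m2]
  conv_rhs => rw [← Finset.add_sum_erase _ _ m1, ← Finset.add_sum_erase _ _ m2]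
  have e : ∑ r ∈ ((Finset.range R).erase j).erase (j+1),
      |(Function.update w (j+1) x (r+1) : ℝ) - (Function.update w (j+1) x r : ℕ)| =
      ∑ r ∈ ((Finset.range R).erase j).erase (j+1), |(w (r+1) : ℝ) - w r| := by
    apply Finset.sum_congr rfl
    intro r hr
    simp only [Finset.mem_erase] at hr
    rw [Function.update_of_ne (by omega), Function.update_of_ne (by omega)]
  rw [e, Function.update_self, Function.update_of_ne (by omega), Function.update_of_ne (by omega), h0]
  have a1 : (w j : ℝ) ≤ n := by exact_mod_cast hle0
  have a2 : (w (j+2) : ℝ) ≤ n := by exact_mod_cast hle2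
  have a3 : (x : ℝ) ≤ n := by exact_mod_cast hx
  have b1 : (0:ℝ) ≤ w j := Nat.cast_nonneg _
  have b2 : (0:ℝ) ≤ w (j+2) := Nat.cast_nonneg _
  have b3 : (0:ℝ) ≤ x := Nat.cast_nonneg _
  have : |(x:ℝ) - w j| + |(w (j+1+1) : ℝ) - x| ≤ |((0:ℕ):ℝ) - w j| + |(w (j+1+1) : ℝ) - (0:ℕ)| := by
    rw [show j + 1 + 1 = j + 2 by ring]
    push_cast
    rw [zero_sub, abs_neg, sub_zero, abs_of_nonneg b1, abs_of_nonneg b2]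
    rcases hn with h | h
    · rw [h]
      rw [abs_of_nonpos (by linarith)]
      rcases abs_cases ((w (j+2) : ℝ) - x) with h | h <;> linarith
    · rw [h]
      rw [abs_of_nonneg (by linarith : (0:ℝ) ≤ n - x)]
      rcases abs_cases ((x : ℝ) - w j) with h | h <;> linarith
  linarith

lemma exists_adj (R n : ℕ) (hn : 0 < n) (w : ℕ → ℕ) (hw : ∀ r ≤ R, w r = 0 ∨ w r = n)
    (p : ℕ) (hp : p < R) (hpn : w p = n) (j0 : ℕ) (hj1 : 1 ≤ j0) (hj2 : j0 + 1 < R) (hj0 : w j0 = 0) :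
    ∃ j, j + 2 < R ∧ w (j+1) = 0 ∧ (w j = n ∨ w (j+2) = n) := by
  rcases lt_trichotomy p j0 with h | h | h
  · have hex : ∃ d, w (p + d) = 0 := ⟨j0 - p, by rw [← hj0]; congr 1; omega⟩
    have hs := Nat.find_spec hex
    have hle : Nat.find hex ≤ j0 - p := Nat.find_min' hex (by rw [← hj0]; congr 1; omega)
    have hne : Nat.find hex ≠ 0 := by
      intro h0; rw [h0, add_zero, hpn] at hs; omega
    obtain ⟨d, hd⟩ := Nat.exists_eq_succ_of_ne_zero hne
    have hm := Nat.find_min hex (m := d) (by omega)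
    rw [hd] at hs
    refine ⟨p + d, by omega, hs, Or.inl ?_⟩
    rcases hw (p + d) (by omega) with h' | h'
    · exact absurd h' hm
    · exact h'
  · subst h; omega
  · have hex : ∃ d, d ≤ p ∧ w (p - d) = 0 := ⟨p - j0, by omega, by rw [← hj0]; congr 1; omega⟩
    have hs := Nat.find_spec hex
    have hle : Nat.find hex ≤ p - j0 := Nat.find_min' hex ⟨by omega, by rw [← hj0]; congr 1; omega⟩
    have hne : Nat.find hex ≠ 0 := by
      intro h0; rw [h0] at hs; simp only [Nat.sub_zero, hpn] at hs; omega
    obtain ⟨d, hd⟩ := Nat.exists_eq_succ_of_ne_zero hne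
    have hm := Nat.find_min hex (m := d) (by omega)
    rw [hd] at hs
    refine ⟨p - (d+1) - 1, by omega, ?_, Or.inr ?_⟩
    · rw [← hs.2]; congr 1; omega
    · have e : p - (d+1) - 1 + 2 = p - d := by omega
      rw [e]
      rcases hw (p - d) (by omega) with h' | h'
      · exact absurd ⟨by omega, h'⟩ hm
      · exact h'

lemma fill_lemma (R n : ℕ) (hn : 0 < n) : ∀ (z q : ℕ) (w : ℕ → ℕ),
    (∀ r ≤ R, w r = 0 ∨ w r = n) → (∃ p < R, w p = n) →
    ((Finset.range R).filter (fun r => 1 ≤ r ∧ r + 1 < R ∧ w r = 0)).card = z → q ≤ n * z →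
    ∃ w' : ℕ → ℕ, (∀ r, ¬ (1 ≤ r ∧ r + 1 < R) → w' r = w r) ∧ (∀ r, w r ≤ w' r) ∧
      (∀ r ≤ R, w' r ≤ n) ∧
      ∑ r ∈ Finset.range R, w' r = ∑ r ∈ Finset.range R, w r + q ∧
      ∑ r ∈ Finset.range R, |(w' (r+1) : ℝ) - w' r| ≤ ∑ r ∈ Finset.range R, |(w (r+1) : ℝ) - w r| ∧
      ((Finset.range R).filter fun r => 0 < w' r ∧ w' r < n).card ≤ 1 := by
  intro z
  induction z with
  | zero =>
    intro q w hw hp hz hq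
    refine ⟨w, fun _ _ => rfl, fun _ => le_rfl, fun r hr => by rcases hw r hr with h | h <;> omega,
      by omega, le_rfl, ?_⟩
    rw [Finset.filter_false_of_mem]
    · simp
    · intro r hr
      rw [Finset.mem_range] at hr
      rcases hw r hr.le with h | h <;> omega
  | succ z ih =>
    intro q w hw hp hz hq
    obtain ⟨p, hpR, hpn⟩ := hp
    have hne : ((Finset.range R).filter (fun r => 1 ≤ r ∧ r + 1 < R ∧ w r = 0)).Nonempty := by
      rw [← Finset.card_pos]; omega
    obtain ⟨j0, hj0⟩ := hne
    rw [Finset.mem_filter] at hj0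
    obtain ⟨j, hj, hj1, hj2⟩ := exists_adj R n hn w hw p hpR hpn j0 hj0.2.1 hj0.2.2.1 hj0.2.2.2
    have hwle : ∀ r ≤ R, w r ≤ n := fun r hr => by rcases hw r hr with h | h <;> omega
    have hvar := fun x (hx : x ≤ n) => var_update R j x n w (by omega) hj1 hx hj2 (hwle _ (by omega)) (hwle _ (by omega))
    have hmem : j + 1 ∈ Finset.range R := Finset.mem_range.2 (by omega)
    have hsum : ∀ x, ∑ r ∈ Finset.range R, Function.update w (j+1) x r = ∑ r ∈ Finset.range R, w r + x := by
      intro x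
      rw [Finset.sum_update_of_mem hmem, ← Finset.add_sum_erase _ w hmem, hj1,
        Finset.sdiff_singleton_eq_erase]
      omega
    by_cases hqn : q ≤ n
    · refine ⟨Function.update w (j+1) q, ?_, ?_, ?_, hsum q, hvar q hqn, ?_⟩
      · intro r hr
        rw [Function.update_of_ne (by omega)]
      · intro r
        by_cases h : r = j+1
        · rw [h, hj1]; omega
        · rw [Function.update_of_ne h]
      · intro r hr
        by_cases h : r = j+1
        · rw [h, Function.update_self]; exact hqn
        · rw [Function.update_of_ne h]; exact hwle r hr
      · calc _ ≤ ({j+1} : Finset ℕ).card := by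
              apply Finset.card_le_card
              intro r hr
              rw [Finset.mem_filter, Finset.mem_range] at hr
              rw [Finset.mem_singleton]
              by_contra h
              rw [Function.update_of_ne h] at hr
              rcases hw r hr.1.le with h' | h' <;> omega
          _ = 1 := by simp
    · obtain ⟨w', c1, c2, c3, c4, c5, c6⟩ := ih (q - n) (Function.update w (j+1) n) (by
          intro r hr
          by_cases h : r = j+1
          · right; rw [h, Function.update_self]
          · rw [Function.update_of_ne h]; exact hw r hr) (by
          refine ⟨p, hpR, ?_⟩
          rw [Function.update_of_ne, hpn]
          rintro rfl; omega) (by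
          have : (Finset.range R).filter (fun r => 1 ≤ r ∧ r + 1 < R ∧ Function.update w (j+1) n r = 0)
              = ((Finset.range R).filter (fun r => 1 ≤ r ∧ r + 1 < R ∧ w r = 0)).erase (j+1) := by
            ext r
            simp only [Finset.mem_filter, Finset.mem_erase]
            by_cases h : r = j+1
            · subst h; simp; omega
            · rw [Function.update_of_ne h]; tauto
          rw [this, Finset.card_erase_of_mem, hz]
          · rfl
          · simp only [Finset.mem_filter, Finset.mem_range]; omega) (by
          rw [Nat.mul_succ] at hq; omega)
      refine ⟨w', ?_, ?_, c3, ?_, c5.trans (hvar n le_rfl), c6⟩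
      · intro r hr
        rw [c1 r hr, Function.update_of_ne (by omega)]
      · intro r
        refine le_trans ?_ (c2 r)
        by_cases h : r = j+1
        · rw [h, hj1]; omega
        · rw [Function.update_of_ne h]
      · rw [c4, hsum]; omega


lemma const_piece {f : ℝ → ℝ} {a b c : ℝ} (hab : a ≤ b) (h : ∀ x ∈ Ioo a b, f x = c) :
    IntervalIntegrable f volume a b ∧ ∫ x in a..b, f x = (b - a) * c := by
  constructor
  · rw [intervalIntegrable_iff_integrableOn_Ioo_of_le hab]
    refine (integrableOn_congr_fun (g := fun _ => c) h measurableSet_Ioo).2 ?_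
    exact integrableOn_const (by simp)
  · rw [intervalIntegral.integral_of_le hab, integral_Ioc_eq_integral_Ioo,
      setIntegral_congr_fun (g := fun _ => c) measurableSet_Ioo h, setIntegral_const]
    simp [measureReal_def, hab]

lemma floor_mul_of_mem {n r : ℕ} (hn : 0 < n) {x : ℝ} (h1 : (r:ℝ) / n ≤ x) (h2 : x < ((r:ℝ)+1) / n) :
    ⌊(n:ℝ) * x⌋₊ = r := by
  have hn' : (0:ℝ) < n := by exact_mod_cast hn
  rw [div_le_iff₀ hn'] at h1
  rw [lt_div_iff₀ hn'] at h2
  rw [Nat.floor_eq_iff (by nlinarith [Nat.cast_nonneg (α := ℝ) r])]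
  constructor <;> linarith

lemma floor_integral (G : ℕ → ℝ) {n : ℕ} (hn : 0 < n) (R : ℕ) :
    ∫ x in (0:ℝ)..((R:ℝ)/n), G ⌊(n:ℝ) * x⌋₊ = (1 / n) * ∑ r ∈ Finset.range R, G r := by
  have hn' : (0:ℝ) < n := by exact_mod_cast hn
  have hp : ∀ r : ℕ, IntervalIntegrable (fun x => G ⌊(n:ℝ) * x⌋₊) volume ((r:ℝ)/n) (((r+1:ℕ):ℝ)/n) ∧
      ∫ x in ((r:ℝ)/n)..(((r+1:ℕ):ℝ)/n), G ⌊(n:ℝ) * x⌋₊ = ((((r+1:ℕ):ℝ)/n) - (r:ℝ)/n) * G r := by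
    intro r
    apply const_piece
    · gcongr; simp
    · intro x hx
      rw [floor_mul_of_mem hn hx.1.le (by have := hx.2; push_cast at this; exact this)]
  have := intervalIntegral.sum_integral_adjacent_intervals (a := fun r : ℕ => (r:ℝ)/n) (n := R)
    (μ := volume) (f := fun x => G ⌊(n:ℝ) * x⌋₊) (fun k _ => (hp k).1)
  simp only [Nat.cast_zero, zero_div] at this
  rw [← this, Finset.mul_sum]
  apply Finset.sum_congr rfl
  intro r _
  rw [(hp r).2]
  push_cast
  field_simp
  ring

def smp (v : ℝ → ℝ) (n r : ℕ) : ℝ :=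
  if h : ∃ x ∈ Ioo ((r:ℝ)/n) (((r:ℝ)+1)/n), v x = 0 ∨ v x = 1 then h.choose else ((r:ℝ) + 1/2)/n

lemma smp_mem (v : ℝ → ℝ) {n : ℕ} (hn : 0 < n) (r : ℕ) :
    smp v n r ∈ Ioo ((r:ℝ)/n) (((r:ℝ)+1)/n) := by
  have hn' : (0:ℝ) < n := by exact_mod_cast hn
  unfold smp
  split_ifs with h
  · exact h.choose_spec.1
  · constructor <;> gcongr <;> linarith

lemma smp_part (v : ℝ → ℝ) (n r : ℕ) (h0 : v (smp v n r) ≠ 0) (h1 : v (smp v n r) ≠ 1) :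
    ∀ x ∈ Ioo ((r:ℝ)/n) (((r:ℝ)+1)/n), v x ≠ 0 ∧ v x ≠ 1 := by
  by_contra hcon
  push Not at hcon
  have hex : ∃ x ∈ Ioo ((r:ℝ)/n) (((r:ℝ)+1)/n), v x = 0 ∨ v x = 1 := by
    obtain ⟨x, hx, h⟩ := hcon
    exact ⟨x, hx, by tauto⟩
  have e : smp v n r = hex.choose := by unfold smp; rw [dif_pos hex]
  have := hex.choose_spec.2
  rw [← e] at this
  tauto

def vs (L : ℝ) (v : ℝ → ℝ) (n r : ℕ) : ℝ := v (smp v n (min r (⌊L * n⌋₊ - 1)))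

lemma row_sub {L : ℝ} (hL : 0 < L) {n : ℕ} (hn : 0 < n) {r : ℕ} (hr : r < ⌊L * n⌋₊) :
    Ioo ((r:ℝ)/n) (((r:ℝ)+1)/n) ⊆ Ioo 0 L := by
  have hn' : (0:ℝ) < n := by exact_mod_cast hn
  have h1 : ((⌊L * n⌋₊ : ℕ) : ℝ) ≤ L * n := Nat.floor_le (by positivity)
  have h2 : (r:ℝ) + 1 ≤ (⌊L * n⌋₊ : ℕ) := by exact_mod_cast hr
  intro x hx
  refine ⟨lt_of_le_of_lt (by positivity) hx.1, hx.2.trans_le ?_⟩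
  rw [div_le_iff₀ hn']; linarith

lemma smp_in {L : ℝ} (hL : 0 < L) (v : ℝ → ℝ) {n : ℕ} (hn : 0 < n) (hR : 1 ≤ ⌊L * n⌋₊) (r : ℕ) :
    smp v n (min r (⌊L * n⌋₊ - 1)) ∈ Ioo 0 L :=
  row_sub hL hn (by omega) (smp_mem v hn _)

lemma vs_range {L : ℝ} (hL : 0 < L) {v : ℝ → ℝ} (hrange : ∀ x ∈ Ioo 0 L, 0 ≤ v x ∧ v x ≤ 1)
    {n : ℕ} (hn : 0 < n) (hR : 1 ≤ ⌊L * n⌋₊) (r : ℕ) : 0 ≤ vs L v n r ∧ vs L v n r ≤ 1 :=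
  hrange _ (smp_in hL v hn hR r)

lemma smp_mono (v : ℝ → ℝ) {n : ℕ} (hn : 0 < n) : Monotone (smp v n) := by
  apply monotone_nat_of_le_succ
  intro r
  have h1 := (smp_mem v hn r).2
  have h2 := (smp_mem v hn (r+1)).1
  push_cast at h2
  linarith

lemma vs_var {L : ℝ} (hL : 0 < L) {v : ℝ → ℝ} (hbv : BoundedVariationOn v (Ioo 0 L))
    {n : ℕ} (hn : 0 < n) (hR : 1 ≤ ⌊L * n⌋₊) (M : ℕ) :
    ∑ r ∈ Finset.range M, |vs L v n (r+1) - vs L v n r| ≤ (eVariationOn v (Ioo 0 L)).toReal := by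
  have h := eVariationOn.sum_le (f := v) (s := Ioo 0 L) (n := M)
    (u := fun r => smp v n (min r (⌊L * n⌋₊ - 1)))
    (fun i j hij => smp_mono v hn (by omega)) (fun i => smp_in hL v hn hR i)
  have h2 := ENNReal.toReal_mono hbv h
  rw [ENNReal.toReal_sum (fun _ _ => edist_ne_top _ _)] at h2
  refine le_trans (le_of_eq ?_) h2
  apply Finset.sum_congr rfl
  intro r _
  rw [edist_dist, ENNReal.toReal_ofReal dist_nonneg, Real.dist_eq]
  rfl

lemma vs_part {L : ℝ} (hL : 0 < L) {v : ℝ → ℝ} (hrange : ∀ x ∈ Ioo 0 L, 0 ≤ v x ∧ v x ≤ 1)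
    {n : ℕ} (hn : 0 < n) :
    (((Finset.range ⌊L * n⌋₊).filter fun r => vs L v n r ≠ 0 ∧ vs L v n r ≠ 1).card : ℝ) ≤
      n * (volume {x ∈ Ioo 0 L | 0 < v x ∧ v x < 1}).toReal := by
  have hn' : (0:ℝ) < n := by exact_mod_cast hn
  set S := (Finset.range ⌊L * n⌋₊).filter fun r => vs L v n r ≠ 0 ∧ vs L v n r ≠ 1 with hS
  have hsub : (⋃ r ∈ S, Ioo ((r:ℝ)/n) (((r:ℝ)+1)/n)) ⊆ {x ∈ Ioo 0 L | 0 < v x ∧ v x < 1} := by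
    intro x hx
    simp only [mem_iUnion] at hx
    obtain ⟨r, hr, hx⟩ := hx
    rw [hS, Finset.mem_filter, Finset.mem_range] at hr
    have e : vs L v n r = v (smp v n r) := by unfold vs; congr 2; omega
    rw [e] at hr
    have h1 := smp_part v n r hr.2.1 hr.2.2 x hx
    have h2 := row_sub hL hn hr.1 hx
    have h3 := hrange x h2
    exact ⟨h2, lt_of_le_of_ne h3.1 (Ne.symm h1.1), lt_of_le_of_ne h3.2 h1.2⟩
  have hfin : volume {x ∈ Ioo 0 L | 0 < v x ∧ v x < 1} ≠ ∞ := by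
    refine ne_top_of_le_ne_top ?_ (measure_mono (fun x hx => hx.1) : _ ≤ volume (Ioo 0 L))
    simp
  have hd : (S : Set ℕ).PairwiseDisjoint (fun r : ℕ => Ioo ((r:ℝ)/n) (((r:ℝ)+1)/n)) := by
    intro i _ j _ hij
    rw [Function.onFun, Set.disjoint_left]
    intro x hx hy
    apply hij
    rw [← floor_mul_of_mem hn hx.1.le hx.2, ← floor_mul_of_mem hn hy.1.le hy.2]
  have hm := measure_biUnion_finset (μ := volume) hd (fun _ _ => measurableSet_Ioo)
  have hle := ENNReal.toReal_mono hfin (measure_mono (μ := volume) hsub)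
  rw [hm, ENNReal.toReal_sum (by simp)] at hle
  have e : ∀ r ∈ S, (volume (Ioo ((r:ℝ)/n) (((r:ℝ)+1)/n))).toReal = 1 / n := by
    intro r _
    rw [Real.volume_Ioo, ENNReal.toReal_ofReal]
    · ring
    · rw [← sub_div]; simp
  rw [Finset.sum_congr rfl e, Finset.sum_const, nsmul_eq_mul] at hle
  rw [mul_one_div, div_le_iff₀ hn'] at hle
  linarith

lemma R_tendsto {L : ℝ} (hL : 0 < L) : Tendsto (fun n : ℕ => (⌊L * n⌋₊ : ℝ) / n) atTop (nhds L) :=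
  (tendsto_nat_floor_mul_div_atTop hL.le).comp tendsto_natCast_atTop_atTop

lemma R_large {L : ℝ} (hL : 0 < L) (K : ℕ) : ∀ᶠ n : ℕ in atTop, K ≤ ⌊L * n⌋₊ := by
  have : Tendsto (fun n : ℕ => ⌊L * n⌋₊) atTop atTop :=
    tendsto_nat_floor_atTop.comp (tendsto_natCast_atTop_atTop.const_mul_atTop hL)
  exact this.eventually_ge_atTop K

lemma inv_tendsto (c : ℝ) : Tendsto (fun n : ℕ => c / (n:ℝ)) atTop (nhds 0) :=
  tendsto_const_nhds.div_atTop tendsto_natCast_atTop_atTop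

lemma smp_tendsto {L : ℝ} (hL : 0 < L) (v : ℝ → ℝ) {x : ℝ} (hx : x ∈ Ioo 0 L) :
    Tendsto (fun n : ℕ => smp v n (min ⌊(n:ℝ) * x⌋₊ (⌊L * n⌋₊ - 1))) atTop (nhds x) := by
  rw [tendsto_iff_dist_tendsto_zero]
  refine squeeze_zero' (Eventually.of_forall fun _ => dist_nonneg) ?_ (inv_tendsto 2)
  filter_upwards [R_large hL 1, eventually_gt_atTop 0] with n hR hn
  have hn' : (0:ℝ) < n := by exact_mod_cast hn
  have hxn : 0 ≤ (n:ℝ) * x := mul_nonneg hn'.le hx.1.le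
  have h1 := Nat.floor_le hxn
  have h2 := Nat.lt_floor_add_one ((n:ℝ) * x)
  have h3 : ⌊(n:ℝ) * x⌋₊ ≤ ⌊L * n⌋₊ := Nat.floor_mono (by nlinarith [hx.2])
  obtain ⟨m1, m2⟩ := smp_mem v hn (min ⌊(n:ℝ) * x⌋₊ (⌊L * n⌋₊ - 1))
  set q := min ⌊(n:ℝ) * x⌋₊ (⌊L * n⌋₊ - 1) with hq
  have a1 : (q : ℝ) ≤ ⌊(n:ℝ) * x⌋₊ := by exact_mod_cast min_le_left _ _
  have a2 : (⌊(n:ℝ) * x⌋₊ : ℝ) ≤ q + 1 := by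
    have : ⌊(n:ℝ) * x⌋₊ ≤ q + 1 := by omega
    exact_mod_cast this
  rw [div_lt_iff₀ hn'] at m1
  rw [lt_div_iff₀ hn'] at m2
  rw [Real.dist_eq, le_div_iff₀ hn', ← abs_of_pos hn', ← abs_mul, abs_le]
  constructor <;> nlinarith

lemma vs_ae {L : ℝ} (hL : 0 < L) {v : ℝ → ℝ} (hbv : BoundedVariationOn v (Ioo 0 L)) :
    ∀ᵐ x ∂(volume.restrict (Ioo 0 L)),
      Tendsto (fun n : ℕ => vs L v n ⌊(n:ℝ) * x⌋₊) atTop (nhds (v x)) := by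
  rw [ae_restrict_iff' measurableSet_Ioo]
  filter_upwards [hbv.locallyBoundedVariationOn.ae_differentiableWithinAt_of_mem] with x hx hxm
  have hc : ContinuousAt v x :=
    ((hx hxm).differentiableAt (isOpen_Ioo.mem_nhds hxm)).continuousAt
  exact hc.tendsto.comp (smp_tendsto hL v hxm)

lemma vs_zero {L : ℝ} (hL : 0 < L) {v : ℝ → ℝ} {a : ℝ}
    (ha : Tendsto v (nhdsWithin 0 (Ioo 0 L)) (nhds a)) :
    Tendsto (fun n : ℕ => vs L v n 0) atTop (nhds a) := by
  apply ha.comp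
  rw [tendsto_nhdsWithin_iff]
  constructor
  · refine squeeze_zero' ?_ ?_ (inv_tendsto 1)
    · filter_upwards [R_large hL 1, eventually_gt_atTop 0] with n hR hn
      exact (smp_in hL v hn hR 0).1.le
    · filter_upwards [eventually_gt_atTop 0] with n hn
      have := (smp_mem v hn 0).2
      simp at this
      simpa using this.le
  · filter_upwards [R_large hL 1, eventually_gt_atTop 0] with n hR hn
    exact smp_in hL v hn hR 0

lemma vs_last {L : ℝ} (hL : 0 < L) {v : ℝ → ℝ} {b : ℝ}
    (hb : Tendsto v (nhdsWithin L (Ioo 0 L)) (nhds b)) :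
    Tendsto (fun n : ℕ => vs L v n ⌊L * n⌋₊) atTop (nhds b) := by
  apply hb.comp
  rw [tendsto_nhdsWithin_iff]
  constructor
  · have hlow : Tendsto (fun n : ℕ => (⌊L * n⌋₊ : ℝ) / n - 1 / n) atTop (nhds L) := by
      simpa using (R_tendsto hL).sub (inv_tendsto 1)
    refine tendsto_of_tendsto_of_tendsto_of_le_of_le' hlow tendsto_const_nhds ?_ ?_
    · filter_upwards [R_large hL 1, eventually_gt_atTop 0] with n hR hn
      have := (smp_mem v hn (min ⌊L * n⌋₊ (⌊L * n⌋₊ - 1))).1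
      refine le_trans (le_of_eq ?_) this.le
      rw [min_eq_right (by omega), ← sub_div]
      push_cast [hR]
      rfl
    · filter_upwards [R_large hL 1, eventually_gt_atTop 0] with n hR hn
      exact (smp_in hL v hn hR _).2.le
  · filter_upwards [R_large hL 1, eventually_gt_atTop 0] with n hR hn
    exact smp_in hL v hn hR _

lemma vs_last_eq (L : ℝ) (v : ℝ → ℝ) (n : ℕ) : vs L v n (⌊L * n⌋₊ - 1) = vs L v n ⌊L * n⌋₊ := by
  unfold vs; congr 2; omega

lemma vs_meas (L : ℝ) (v : ℝ → ℝ) (n : ℕ) : Measurable (fun x : ℝ => vs L v n ⌊(n:ℝ) * x⌋₊) :=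
  (Measurable.of_discrete (f := vs L v n)).comp (Nat.measurable_floor.comp (measurable_const_mul _))

lemma v_aesm {L : ℝ} (hL : 0 < L) {v : ℝ → ℝ} (hbv : BoundedVariationOn v (Ioo 0 L)) :
    AEStronglyMeasurable v (volume.restrict (Ioo 0 L)) :=
  aestronglyMeasurable_of_tendsto_ae atTop (fun n => (vs_meas L v n).aestronglyMeasurable) (vs_ae hL hbv)

lemma sum_lim {L : ℝ} (hL : 0 < L) {v : ℝ → ℝ} (hrange : ∀ x ∈ Ioo 0 L, 0 ≤ v x ∧ v x ≤ 1)
    (hbv : BoundedVariationOn v (Ioo 0 L)) (f : ℝ → ℝ) (hf : Continuous f)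
    (hf1 : ∀ y, 0 ≤ y → y ≤ 1 → |f y| ≤ 1) :
    Tendsto (fun n : ℕ => (1 / (n:ℝ)) * ∑ r ∈ Finset.range ⌊L * n⌋₊, f (vs L v n r)) atTop
      (nhds (∫ x in Ioo 0 L, f (v x))) := by
  have key : Tendsto (fun n : ℕ => ∫ x in Ioo 0 L,
      (Iio ((⌊L * n⌋₊ : ℝ) / n)).indicator (fun x => f (vs L v n ⌊(n:ℝ) * x⌋₊)) x) atTop
      (nhds (∫ x in Ioo 0 L, f (v x))) := by
    apply tendsto_integral_filter_of_dominated_convergence (fun _ => (1:ℝ))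
    · exact Eventually.of_forall fun n =>
        ((hf.measurable.comp (vs_meas L v n)).indicator measurableSet_Iio).aestronglyMeasurable
    · filter_upwards [R_large hL 1, eventually_gt_atTop 0] with n hR hn
      refine Eventually.of_forall fun x => ?_
      have h := vs_range hL hrange hn hR ⌊(n:ℝ) * x⌋₊
      unfold indicator
      split_ifs
      · exact hf1 _ h.1 h.2
      · simp
    · exact integrableOn_const (by simp)
    · filter_upwards [vs_ae hL hbv, ae_restrict_mem measurableSet_Ioo] with x hx hxm
      have h1 := (hf.tendsto (v x)).comp hx
      refine h1.congr' ?_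
      filter_upwards [(R_tendsto hL).eventually_const_lt hxm.2] with n hn
      rw [indicator_of_mem (show x ∈ Iio _ from hn)]
      rfl
  refine key.congr' ?_
  filter_upwards [eventually_gt_atTop 0] with n hn
  have hn' : (0:ℝ) < n := by exact_mod_cast hn
  rw [setIntegral_indicator measurableSet_Iio, ← floor_integral (fun r => f (vs L v n r)) hn,
    intervalIntegral.integral_of_le (by positivity), integral_Ioc_eq_integral_Ioo]
  congr 2
  have : (⌊L * n⌋₊ : ℝ) / n ≤ L := by
    rw [div_le_iff₀ hn']; exact Nat.floor_le (by positivity)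
  ext x; simp only [mem_inter_iff, mem_Ioo, mem_Iio]
  constructor
  · rintro ⟨⟨a, b⟩, c⟩; exact ⟨a, c⟩
  · rintro ⟨a, c⟩; exact ⟨⟨a, by linarith⟩, c⟩


def Good (L : ℝ) (v : ℝ → ℝ) (a b : ℝ) (n k : ℕ) (ε : ℝ) (w : ℕ → ℕ) : Prop :=
  (∀ r ≤ ⌊L * (n:ℝ)⌋₊, w r ≤ n) ∧
  cnt n ⌊L * (n:ℝ)⌋₊ (⌊L * (n:ℝ)^2⌋₊ - n * ⌊L * (n:ℝ)⌋₊) w = k ∧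
  2 * (((Finset.range ⌊L * (n:ℝ)⌋₊).filter fun r => 0 < w r ∧ w r < n).card : ℝ) +
    ∑ r ∈ Finset.range ⌊L * (n:ℝ)⌋₊, |(w (r+1) : ℝ) - w r| ≤
      n * (2 * (volume {x ∈ Ioo 0 L | 0 < v x ∧ v x < 1}).toReal +
        (eVariationOn v (Ioo 0 L)).toReal + ε) ∧
  |(w 0 : ℝ) - n * a| ≤ ε * n ∧ |(w (⌊L * (n:ℝ)⌋₊ - 1) : ℝ) - n * b| ≤ ε * n ∧
  |(w ⌊L * (n:ℝ)⌋₊ : ℝ) - n * b| ≤ ε * n ∧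
  ∑ r ∈ Finset.range ⌊L * (n:ℝ)⌋₊, |(w r : ℝ) - n * vs L v n r| ≤ ε * (n:ℝ)^2

lemma t_bounds {L : ℝ} (hL : 0 < L) {n : ℕ} (hn : 0 < n) :
    n * ⌊L * (n:ℝ)⌋₊ ≤ ⌊L * (n:ℝ)^2⌋₊ ∧ ⌊L * (n:ℝ)^2⌋₊ - n * ⌊L * (n:ℝ)⌋₊ < n := by
  have hn' : (0:ℝ) < n := by exact_mod_cast hn
  have h1 := Nat.floor_le (show 0 ≤ L * (n:ℝ) by positivity)
  have h2 := Nat.lt_floor_add_one (L * (n:ℝ))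
  have hA : n * ⌊L * (n:ℝ)⌋₊ ≤ ⌊L * (n:ℝ)^2⌋₊ := by
    apply Nat.le_floor
    push_cast
    nlinarith
  refine ⟨hA, ?_⟩
  have h3 := Nat.floor_le (show 0 ≤ L * (n:ℝ)^2 by positivity)
  have h4 : ((⌊L * (n:ℝ)^2⌋₊ : ℕ) : ℝ) < ((n * ⌊L * (n:ℝ)⌋₊ + n : ℕ) : ℝ) := by
    push_cast
    nlinarith
  have h5 : ⌊L * (n:ℝ)^2⌋₊ < n * ⌊L * (n:ℝ)⌋₊ + n := by exact_mod_cast h4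
  omega

lemma v_int {L : ℝ} (hL : 0 < L) {v : ℝ → ℝ} (hrange : ∀ x ∈ Ioo 0 L, 0 ≤ v x ∧ v x ≤ 1)
    (hbv : BoundedVariationOn v (Ioo 0 L)) (f : ℝ → ℝ) (hf : Continuous f)
    (hf1 : ∀ y, 0 ≤ y → y ≤ 1 → |f y| ≤ 1) : IntegrableOn (fun x => f (v x)) (Ioo 0 L) := by
  have : IsFiniteMeasure (volume.restrict (Ioo 0 L)) := ⟨by simp⟩
  refine Integrable.of_bound (hf.comp_aestronglyMeasurable (v_aesm hL hbv)) 1 ?_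
  rw [ae_restrict_iff' measurableSet_Ioo]
  filter_upwards with x hx
  rw [Real.norm_eq_abs]
  exact hf1 _ (hrange x hx).1 (hrange x hx).2

lemma int_lt {L : ℝ} (hL : 0 < L) {v : ℝ → ℝ} (hrange : ∀ x ∈ Ioo 0 L, 0 ≤ v x ∧ v x ≤ 1)
    (hbv : BoundedVariationOn v (Ioo 0 L))
    (hpos : 0 < volume {x ∈ Ioo 0 L | 0 < v x ∧ v x < 1})
    (f g : ℝ → ℝ) (hf : Continuous f) (hg : Continuous g)
    (hf1 : ∀ y, 0 ≤ y → y ≤ 1 → |f y| ≤ 1) (hg1 : ∀ y, 0 ≤ y → y ≤ 1 → |g y| ≤ 1)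
    (hle : ∀ y, 0 ≤ y → y ≤ 1 → f y ≤ g y) (hlt : ∀ y, 0 < y → y < 1 → f y < g y) :
    ∫ x in Ioo 0 L, f (v x) < ∫ x in Ioo 0 L, g (v x) := by
  have i1 := v_int hL hrange hbv f hf hf1
  have i2 := v_int hL hrange hbv g hg hg1
  rw [← sub_pos, ← integral_sub i2 i1]
  rw [setIntegral_pos_iff_support_of_nonneg_ae]
  · refine lt_of_lt_of_le hpos (measure_mono ?_)
    rintro x ⟨hx, h0, h1⟩
    refine ⟨?_, hx⟩
    rw [Function.mem_support]
    have := hlt _ h0 h1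
    linarith
  · rw [EventuallyLE, ae_restrict_iff' measurableSet_Ioo]
    filter_upwards with x hx
    have := hle _ (hrange x hx).1 (hrange x hx).2
    simp only [Pi.zero_apply]
    linarith
  · exact i2.sub i1

lemma between_abs {x p q c e : ℝ} (h1 : min p q ≤ x) (h2 : x ≤ max p q) (hp : |p - c| ≤ e)
    (hq : |q - c| ≤ e) : |x - c| ≤ e := by
  rw [abs_le] at *
  rcases le_total p q with h | h
  · rw [min_eq_left h] at h1; rw [max_eq_right h] at h2; constructor <;> linarith
  · rw [min_eq_right h] at h1; rw [max_eq_left h] at h2; constructor <;> linarith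

set_option maxHeartbeats 1000000 in
lemma caseA {L σ : ℝ} (hL : 0 < L) {v : ℝ → ℝ} (hrange : ∀ x ∈ Ioo 0 L, 0 ≤ v x ∧ v x ≤ 1)
    (hbv : BoundedVariationOn v (Ioo 0 L)) (hint : (∫ x in Ioo 0 L, v x) = σ * L) {a b : ℝ}
    (ha : Tendsto v (nhdsWithin 0 (Ioo 0 L)) (nhds a))
    (hb : Tendsto v (nhdsWithin L (Ioo 0 L)) (nhds b))
    (hpos : 0 < volume {x ∈ Ioo 0 L | 0 < v x ∧ v x < 1}) {ε : ℝ} (hε : 0 < ε) :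
    ∃ η > 0, ∀ᶠ n : ℕ in atTop, ∀ k : ℕ, |(k:ℝ) - σ * L * (n:ℝ)^2| ≤ η * (n:ℝ)^2 →
      ∃ w, Good L v a b n k ε w := by
  set V := (eVariationOn v (Ioo 0 L)).toReal with hV
  have hV0 : 0 ≤ V := ENNReal.toReal_nonneg
  set C := V + L + 10 with hC
  have hC0 : 0 < C := by positivity
  set e := ε / (4 * C) with he
  have he0 : 0 < e := by positivity
  have heC : e * C = ε / 4 := by rw [he]; field_simp
  set f : ℝ → ℝ := fun y => min ((1 + e) * y) 1 with hf
  set g : ℝ → ℝ := fun y => max 0 ((1 + e) * y - e) with hg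
  have fc : Continuous f := by rw [hf]; fun_prop
  have gc : Continuous g := by rw [hg]; fun_prop
  have f0 : ∀ y, 0 ≤ y → 0 ≤ f y := fun y h0 => le_min (by positivity) zero_le_one
  have f1 : ∀ y, f y ≤ 1 := fun y => min_le_right _ _
  have g0 : ∀ y, 0 ≤ g y := fun y => le_max_left _ _
  have g1 : ∀ y, y ≤ 1 → g y ≤ 1 := fun y h => max_le zero_le_one (by nlinarith)
  have fy : ∀ y, 0 ≤ y → y ≤ 1 → y ≤ f y := fun y h0 h => le_min (by nlinarith) h
  have fy' : ∀ y, 0 ≤ y → y ≤ 1 → f y ≤ y + e := fun y h0 h => (min_le_left _ _).trans (by nlinarith)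
  have gy : ∀ y, 0 ≤ y → y ≤ 1 → g y ≤ y := fun y h0 h => max_le h0 (by nlinarith)
  have gy' : ∀ y, 0 ≤ y → y ≤ 1 → y - e ≤ g y := fun y h0 h => le_trans (by nlinarith) (le_max_right _ _)
  have gf : ∀ y, 0 ≤ y → y ≤ 1 → f y - g y ≤ e := fun y h0 h => by
    have := min_le_left ((1 + e) * y) 1
    have := le_max_right 0 ((1 + e) * y - e)
    simp only [hf, hg]; linarith
  have flip : ∀ y z, |f y - f z| ≤ (1 + e) * |y - z| := fun y z => by
    have := abs_min_sub_min_le_max ((1+e)*y) 1 ((1+e)*z) 1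
    rw [sub_self, abs_zero, max_eq_left (abs_nonneg ((1+e)*y - (1+e)*z)), ← mul_sub, abs_mul,
      abs_of_pos (show 0 < 1 + e by positivity)] at this
    exact this
  have glip : ∀ y z, |g y - g z| ≤ (1 + e) * |y - z| := fun y z => by
    have := abs_max_sub_max_le_max 0 ((1+e)*y - e) 0 ((1+e)*z - e)
    rw [sub_self, abs_zero, max_eq_right (abs_nonneg ((1+e)*y - e - ((1+e)*z - e))),
      sub_sub_sub_cancel_right, ← mul_sub, abs_mul, abs_of_pos (show 0 < 1 + e by positivity)] at this
    exact this
  have fb : ∀ y, 0 ≤ y → y ≤ 1 → |f y| ≤ 1 := fun y h0 h => by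
    rw [abs_of_nonneg (f0 y h0)]; exact f1 y
  have gb : ∀ y, 0 ≤ y → y ≤ 1 → |g y| ≤ 1 := fun y h0 h => by
    rw [abs_of_nonneg (g0 y)]; exact g1 y h
  have ib : ∀ y : ℝ, 0 ≤ y → y ≤ 1 → |(id y)| ≤ 1 := fun y h0 h => by
    rw [id, abs_of_nonneg h0]; exact h
  have I1 := int_lt hL hrange hbv hpos id f continuous_id fc ib fb fy (fun y h0 h => by
    refine lt_min ?_ h
    change y < _; nlinarith)
  have I2 := int_lt hL hrange hbv hpos g id gc continuous_id gb ib gy (fun y h0 h => by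
    refine max_lt h0 ?_
    change _ < y; nlinarith)
  simp only [id] at I1 I2
  rw [hint] at I1 I2
  set If := ∫ x in Ioo 0 L, f (v x)
  set Ig := ∫ x in Ioo 0 L, g (v x)
  set η := min (If - σ * L) (σ * L - Ig) / 4 with hη
  have hη0 : 0 < η := by
    have : 0 < min (If - σ * L) (σ * L - Ig) := lt_min (by linarith) (by linarith)
    positivity
  have hη1 : 4 * η ≤ If - σ * L := by rw [hη]; linarith [min_le_left (If - σ * L) (σ * L - Ig)]
  have hη2 : 4 * η ≤ σ * L - Ig := by rw [hη]; linarith [min_le_right (If - σ * L) (σ * L - Ig)]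
  refine ⟨η, hη0, ?_⟩
  have tf := (sum_lim hL hrange hbv f fc fb).eventually (lt_mem_nhds (show If - η < If by linarith))
  have tg := (sum_lim hL hrange hbv g gc gb).eventually (gt_mem_nhds (show Ig < Ig + η by linarith))
  have ta := (vs_zero hL ha).eventually (Metric.closedBall_mem_nhds a he0)
  have tb := (vs_last hL hb).eventually (Metric.closedBall_mem_nhds b he0)
  have tC := (inv_tendsto C).eventually (gt_mem_nhds (show 0 < min η e by positivity))
  filter_upwards [tf, tg, ta, tb, tC, R_large hL 1, eventually_gt_atTop 0] with n tf tg ta tb tC hR hn k hk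
  have hn' : (0:ℝ) < n := by exact_mod_cast hn
  have vr := vs_range hL hrange hn hR
  set s := vs L v n with hs
  have hRle : (⌊L * (n:ℝ)⌋₊ : ℝ) ≤ L * n := Nat.floor_le (by positivity)
  set R := ⌊L * (n:ℝ)⌋₊ with hRdef
  obtain ⟨_, ht⟩ := t_bounds hL hn
  rw [← hRdef] at ht
  set t := ⌊L * (n:ℝ)^2⌋₊ - n * R with htdef
  rw [div_lt_iff₀ hn'] at tC
  have tC1 : C < η * n := tC.trans_le (by gcongr; exact min_le_left _ _)
  have tC2 : C < e * n := tC.trans_le (by gcongr; exact min_le_right _ _)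
  rw [Real.dist_eq, abs_le] at ta tb
  set y1 : ℕ → ℝ := fun r => n * f (s r) with hy1
  set y0 : ℕ → ℝ := fun r => n * g (s r) with hy0
  have y1n : ∀ r, 0 ≤ y1 r := fun r => mul_nonneg hn'.le (f0 _ (vr r).1)
  have y0n : ∀ r, 0 ≤ y0 r := fun r => mul_nonneg hn'.le (g0 _)
  have y1l : ∀ r, y1 r ≤ n := fun r => by
    have := f1 (s r); simp only [hy1]; nlinarith
  have y0l : ∀ r, y0 r ≤ n := fun r => by
    have := g1 (s r) (vr r).2; simp only [hy0]; nlinarith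
  have n1 := fun r => abs_le.1 (rnd_near y1 r (y1n r))
  have n0 := fun r => abs_le.1 (rnd_near y0 r (y0n r))
  have c1 : (n:ℝ) * ∑ r ∈ Finset.range R, f (s r) - R ≤ ∑ r ∈ Finset.range R, (rnd y1 r : ℝ) := by
    have : ∑ r ∈ Finset.range R, (y1 r - 1) ≤ ∑ r ∈ Finset.range R, (rnd y1 r : ℝ) :=
      Finset.sum_le_sum fun r _ => by linarith [(n1 r).2]
    rw [Finset.sum_sub_distrib, ← Finset.mul_sum] at this
    simpa using this
  have c0 : ∑ r ∈ Finset.range R, (rnd y0 r : ℝ) ≤ (n:ℝ) * ∑ r ∈ Finset.range R, g (s r) + R := by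
    have : ∑ r ∈ Finset.range R, (rnd y0 r : ℝ) ≤ ∑ r ∈ Finset.range R, (y0 r + 1) :=
      Finset.sum_le_sum fun r _ => by linarith [(n0 r).1]
    rw [Finset.sum_add_distrib, ← Finset.mul_sum] at this
    simpa using this
  rw [one_div, inv_mul_eq_div, lt_div_iff₀ hn'] at tf
  rw [one_div, inv_mul_eq_div, div_lt_iff₀ hn'] at tg
  rw [abs_le] at hk
  have hn2 : η * n * n ≥ C * n := by nlinarith
  have h0 : cnt n R t (rnd y0) ≤ k := by
    have : ((cnt n R t (rnd y0) : ℕ) : ℝ) ≤ k := by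
      have hlt : rnd y0 R + t - n ≤ n := by
        have := rnd_le y0 R n (y0l R)
        omega
      have hlt' : ((rnd y0 R + t - n : ℕ) : ℝ) ≤ n := by exact_mod_cast hlt
      unfold cnt
      push_cast
      have e1 : (n:ℝ) * ∑ r ∈ Finset.range R, g (s r) ≤ n * ((Ig + η) * n) := by gcongr
      have e2 : (n:ℝ)^2 * Ig ≤ n^2 * (σ * L - 4 * η) := by gcongr; linarith
      have e3 : 0 < η * (n:ℝ)^2 := by positivity
      have e4 : L * n + n ≤ C * n := by rw [hC]; nlinarith
      linarith [hk.1]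
    exact_mod_cast this
  have h1 : k ≤ cnt n R t (rnd y1) := by
    have : (k : ℝ) ≤ ((cnt n R t (rnd y1) : ℕ) : ℝ) := by
      unfold cnt
      push_cast
      have e0 : (0:ℝ) ≤ ((rnd y1 R + t - n : ℕ) : ℝ) := Nat.cast_nonneg _
      have e1 : n * ((If - η) * n) ≤ (n:ℝ) * ∑ r ∈ Finset.range R, f (s r) := by gcongr
      have e2 : (n:ℝ)^2 * (σ * L + 4 * η) ≤ n^2 * If := by gcongr; linarith
      have e3 : 0 < η * (n:ℝ)^2 := by positivity
      have e4 : L * n + n ≤ C * n := by rw [hC]; nlinarith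
      linarith [hk.2]
    exact_mod_cast this
  obtain ⟨w, w1, w2, w3⟩ := mix_lemma n R t k (rnd y0) (rnd y1) (fun r => |y0 r - rnd y0 r|)
    (fun r => |y1 r - rnd y1 r|) (fun r => n * ((1 + e) * |s (r+1) - s r|)) (e * n + 2) h0 h1
    (fun r => by
      refine (rnd_step y0 r (y0n _)).trans ?_
      have : |y0 (r+1) - y0 r| ≤ n * ((1 + e) * |s (r+1) - s r|) := by
        simp only [hy0]
        rw [← mul_sub, abs_mul, abs_of_pos hn']
        gcongr
        exact glip _ _
      linarith)
    (fun r => by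
      refine (rnd_step y1 r (y1n _)).trans ?_
      have : |y1 (r+1) - y1 r| ≤ n * ((1 + e) * |s (r+1) - s r|) := by
        simp only [hy1]
        rw [← mul_sub, abs_mul, abs_of_pos hn']
        gcongr
        exact flip _ _
      linarith)
    (fun r => ⟨abs_nonneg _, rnd_near y0 r (y0n r)⟩) (fun r => ⟨abs_nonneg _, rnd_near y1 r (y1n r)⟩)
    (fun r => by
      have q1 := n1 r
      have q0 := n0 r
      have q2 := gf _ (vr r).1 (vr r).2
      have q3 := fy _ (vr r).1 (vr r).2
      have q4 := gy _ (vr r).1 (vr r).2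
      simp only [hy1, hy0] at q1 q0
      have p2 := mul_le_mul_of_nonneg_left q2 hn'.le
      have p3 := mul_le_mul_of_nonneg_left q3 hn'.le
      have p4 := mul_le_mul_of_nonneg_left q4 hn'.le
      rw [mul_sub] at p2
      have hen : 0 < (n:ℝ) * e := by positivity
      rw [mul_comm e, abs_le]
      constructor <;> linarith)
  have hclose : ∀ r, |(w r : ℝ) - n * s r| ≤ e * n + 1 := by
    intro r
    obtain ⟨b1, b2⟩ := w2 r
    have b1' : min (rnd y0 r : ℝ) (rnd y1 r : ℝ) ≤ w r := by exact_mod_cast b1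
    have b2' : (w r : ℝ) ≤ max (rnd y0 r : ℝ) (rnd y1 r : ℝ) := by exact_mod_cast b2
    have q1 := n1 r
    have q0 := n0 r
    have q3 := fy _ (vr r).1 (vr r).2
    have q4 := gy _ (vr r).1 (vr r).2
    have q5 := fy' _ (vr r).1 (vr r).2
    have q6 := gy' _ (vr r).1 (vr r).2
    simp only [hy1, hy0] at q1 q0
    have p3 := mul_le_mul_of_nonneg_left q3 hn'.le
    have p4 := mul_le_mul_of_nonneg_left q4 hn'.le
    have p5 := mul_le_mul_of_nonneg_left q5 hn'.le
    have p6 := mul_le_mul_of_nonneg_left q6 hn'.le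
    rw [mul_add] at p5
    rw [mul_sub] at p6
    have hen : 0 < (n:ℝ) * e := by positivity
    rw [mul_comm e]
    refine between_abs b1' b2' ?_ ?_ <;> rw [abs_le] <;> constructor <;> linarith
  have hen : 0 < e * n := by positivity
  have he4 : e * n * C = ε / 4 * n := by rw [mul_right_comm, heC]
  have heps : ε * n = 4 * (e * n) * V + 4 * (e * n) * L + 40 * (e * n) := by
    have : ε = 4 * (e * C) := by rw [heC]; ring
    rw [this, hC]; ring
  have hp1 : 0 ≤ e * n * V := by positivity
  have hp2 : 0 ≤ e * n * L := by positivity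
  have hC10 : 10 ≤ C := by rw [hC]; linarith
  have bnd : ∀ r c, (-e ≤ s r - c ∧ s r - c ≤ e) → |(w r : ℝ) - n * c| ≤ ε * n := by
    intro r c hc
    have h1 := abs_le.1 (hclose r)
    have h2 := mul_le_mul_of_nonneg_left hc.1 hn'.le
    have h3 := mul_le_mul_of_nonneg_left hc.2 hn'.le
    rw [mul_sub] at h2 h3
    have h4 : (n:ℝ) * -e = - (e * n) := by ring
    have h5 : (n:ℝ) * e = e * n := by ring
    rw [h4] at h2
    rw [h5] at h3
    rw [abs_le]
    constructor <;> linarith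
  refine ⟨w, ?_, w1, ?_, ?_, ?_, ?_, ?_⟩
  · intro r _
    refine (w2 r).2.trans (max_le (rnd_le y0 r n (y0l r)) (rnd_le y1 r n (y1l r)))
  · have hcard : ((Finset.range R).filter fun r => 0 < w r ∧ w r < n).card ≤
        ((Finset.range R).filter fun r => s r ≠ 0 ∧ s r ≠ 1).card := by
      apply Finset.card_le_card
      intro r hr
      rw [Finset.mem_filter] at hr ⊢
      obtain ⟨hr0, hr1, hr2⟩ := hr
      refine ⟨hr0, ?_, ?_⟩
      · intro hsr
        have a1 : rnd y0 r = 0 := rnd_nat y0 r 0 (by simp [hy0, hsr, hg, he0.le])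
        have a2 : rnd y1 r = 0 := rnd_nat y1 r 0 (by simp [hy1, hsr, hf])
        have := (w2 r).2
        rw [a1, a2] at this
        simp at this
        omega
      · intro hsr
        have a1 : rnd y0 r = n := rnd_nat y0 r n (by simp [hy0, hsr, hg])
        have a2 : rnd y1 r = n := rnd_nat y1 r n (by simp [hy1, hsr, hf, he0.le])
        have := (w2 r).1
        rw [a1, a2] at this
        simp at this
        omega
    have hcard' : (((Finset.range R).filter fun r => 0 < w r ∧ w r < n).card : ℝ) ≤
      n * (volume {x ∈ Ioo 0 L | 0 < v x ∧ v x < 1}).toReal :=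
      le_trans (by exact_mod_cast hcard) (vs_part hL hrange hn)
    have hvar := vs_var hL hbv hn hR R
    rw [← Finset.mul_sum, ← Finset.mul_sum] at w3
    rw [← hs, ← hV] at hvar
    have : (n:ℝ) * ((1 + e) * ∑ r ∈ Finset.range R, |s (r+1) - s r|) ≤ n * ((1 + e) * V) := by gcongr
    rw [← hV]
    have h7 : (n:ℝ) * ((1 + e) * V) = n * V + e * n * V := by ring
    rw [h7] at this
    have h8 : ∀ X : ℝ, (n:ℝ) * (2 * X + V + ε) = 2 * (n * X) + n * V + ε * n := fun X => by ring
    rw [h8]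
    linarith
  · exact bnd 0 a ta
  · have h3 : s (R-1) = s R := vs_last_eq L v n
    exact bnd (R-1) b (by rw [h3]; exact tb)
  · exact bnd R b tb
  · refine (Finset.sum_le_sum fun r _ => hclose r).trans ?_
    rw [Finset.sum_const, Finset.card_range, nsmul_eq_mul]
    have : (R:ℝ) * (e * n + 1) ≤ L * n * (e * n + 1) := by gcongr
    have h3 : ε * (n:ℝ)^2 = (ε * n) * n := by ring
    rw [h3, heps]
    have : L * n * 1 ≤ L * n * (e * n) := by gcongr; linarith
    nlinarith [mul_nonneg hp1 hn'.le, mul_pos hen hn']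


lemma fill_both (R n : ℕ) (hn : 0 < n) (w : ℕ → ℕ) (T : ℕ)
    (hw : ∀ r ≤ R, w r = 0 ∨ w r = n) (hp : ∃ p < R, w p = n) (hp0 : ∃ p < R, w p = 0)
    (h1 : T ≤ ∑ r ∈ Finset.range R, w r +
      n * ((Finset.range R).filter (fun r => 1 ≤ r ∧ r + 1 < R ∧ w r = 0)).card)
    (h2 : ∑ r ∈ Finset.range R, w r ≤ T +
      n * ((Finset.range R).filter (fun r => 1 ≤ r ∧ r + 1 < R ∧ w r = n)).card) :
    ∃ w' : ℕ → ℕ, (∀ r ≤ R, ¬ (1 ≤ r ∧ r + 1 < R) → w' r = w r) ∧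
      (∀ r ≤ R, w' r ≤ n) ∧
      ∑ r ∈ Finset.range R, w' r = T ∧
      ∑ r ∈ Finset.range R, |(w' (r+1) : ℝ) - w' r| ≤ ∑ r ∈ Finset.range R, |(w (r+1) : ℝ) - w r| ∧
      ((Finset.range R).filter fun r => 0 < w' r ∧ w' r < n).card ≤ 1 ∧
      ∑ r ∈ Finset.range R, |(w' r : ℝ) - w r| = |(T:ℝ) - ∑ r ∈ Finset.range R, (w r : ℝ)| := by
  rcases le_total (∑ r ∈ Finset.range R, w r) T with hT | hT
  · obtain ⟨w', a1, a2, a3, a4, a5, a6⟩ := fill_lemma R n hn _ (T - ∑ r ∈ Finset.range R, w r) w hw hp rfl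
      (by omega)
    have a4' : ∑ r ∈ Finset.range R, w' r = T := by omega
    refine ⟨w', fun r _ => a1 r, a3, a4', a5, a6, ?_⟩
    have : ∀ r ∈ Finset.range R, |(w' r : ℝ) - w r| = (w' r : ℝ) - w r := fun r _ => by
      rw [abs_of_nonneg]
      have : (w r : ℝ) ≤ w' r := by exact_mod_cast a2 r
      linarith
    rw [Finset.sum_congr rfl this, Finset.sum_sub_distrib, ← a4', abs_of_nonneg]
    · push_cast; rfl
    · have : ∑ r ∈ Finset.range R, (w r : ℝ) ≤ ((∑ r ∈ Finset.range R, w' r : ℕ) : ℝ) := by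
        rw [a4']; exact_mod_cast hT
      linarith
  · have key : ∀ r ≤ R, w r ≤ n := fun r hr => by rcases hw r hr with h | h <;> omega
    have hfe : (Finset.range R).filter (fun r => 1 ≤ r ∧ r + 1 < R ∧ n - w r = 0) =
        (Finset.range R).filter (fun r => 1 ≤ r ∧ r + 1 < R ∧ w r = n) := by
      apply Finset.filter_congr
      intro r hr
      have := key r (Finset.mem_range.1 hr).le
      constructor
      · rintro ⟨h, h', h''⟩; exact ⟨h, h', by omega⟩
      · rintro ⟨h, h', h''⟩; exact ⟨h, h', by omega⟩
    obtain ⟨w', a1, a2, a3, a4, a5, a6⟩ := fill_lemma R n hn _ (∑ r ∈ Finset.range R, w r - T)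
      (fun r => n - w r) (fun r hr => by rcases hw r hr with h | h <;> omega)
      (by obtain ⟨p, hp, h⟩ := hp0; exact ⟨p, hp, by omega⟩) rfl
      (by rw [hfe]; omega)
    have c1 : ∑ r ∈ Finset.range R, (n - w r) + ∑ r ∈ Finset.range R, w r = R * n := by
      rw [← Finset.sum_add_distrib, Finset.sum_congr rfl (g := fun _ => n)]
      · simp
      · intro r hr
        have := key r (Finset.mem_range.1 hr).le
        omega
    have c2 : ∑ r ∈ Finset.range R, (n - w' r) + ∑ r ∈ Finset.range R, w' r = R * n := by
      rw [← Finset.sum_add_distrib, Finset.sum_congr rfl (g := fun _ => n)]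
      · simp
      · intro r hr
        have := a3 r (Finset.mem_range.1 hr).le
        omega
    have a4' : ∑ r ∈ Finset.range R, (n - w' r) = T := by omega
    have cw : ∀ r ≤ R, ((n - w' r : ℕ) : ℝ) = n - w' r := fun r hr => by rw [Nat.cast_sub (a3 r hr)]
    have cw2 : ∀ r ≤ R, ((n - w r : ℕ) : ℝ) = n - w r := fun r hr => by rw [Nat.cast_sub (key r hr)]
    refine ⟨fun r => n - w' r, ?_, ?_, a4', ?_, ?_, ?_⟩
    · intro r hr hr'
      have := a1 r hr'
      have := key r hr
      have := a3 r hr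
      simp only [] at *
      omega
    · intro r _; exact Nat.sub_le _ _
    · have e1 : ∑ r ∈ Finset.range R, |((n - w' (r+1) : ℕ) : ℝ) - ((n - w' r : ℕ):ℝ)| =
          ∑ r ∈ Finset.range R, |(w' (r+1) : ℝ) - w' r| := by
        apply Finset.sum_congr rfl
        intro r hr
        rw [cw r (Finset.mem_range.1 hr).le, cw (r+1) (Finset.mem_range.1 hr), abs_sub_comm]
        congr 1; ring
      have e2 : ∑ r ∈ Finset.range R, |((n - w (r+1) : ℕ) : ℝ) - ((n - w r : ℕ):ℝ)| =
          ∑ r ∈ Finset.range R, |(w (r+1) : ℝ) - w r| := by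
        apply Finset.sum_congr rfl
        intro r hr
        rw [cw2 r (Finset.mem_range.1 hr).le, cw2 (r+1) (Finset.mem_range.1 hr), abs_sub_comm]
        congr 1; ring
      rw [e1, ← e2]
      exact a5
    · refine le_trans (Finset.card_le_card ?_) a6
      intro r hr
      rw [Finset.mem_filter] at hr ⊢
      have := a3 r (Finset.mem_range.1 hr.1).le
      obtain ⟨hr1, hr2, hr3⟩ := hr
      simp only at hr2 hr3
      refine ⟨hr1, ?_, ?_⟩ <;> omega
    · have : ∀ r ∈ Finset.range R, |((n - w' r : ℕ) : ℝ) - w r| = (w r : ℝ) - ((n - w' r : ℕ):ℝ) := fun r hr => by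
        rw [abs_of_nonpos]
        · ring
        have h1 := a2 r
        have h2 := key r (Finset.mem_range.1 hr).le
        have : n - w' r ≤ w r := by omega
        have : ((n - w' r : ℕ) : ℝ) ≤ w r := by exact_mod_cast this
        linarith
      rw [Finset.sum_congr rfl this, Finset.sum_sub_distrib, ← a4', abs_of_nonpos]
      · push_cast; ring
      · have : ((∑ r ∈ Finset.range R, (n - w' r) : ℕ) : ℝ) ≤ ∑ r ∈ Finset.range R, (w r : ℝ) := by
          rw [a4']; exact_mod_cast hT
        linarith

lemma card_interior (R : ℕ) (P : ℕ → Prop) [DecidablePred P] :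
    ((Finset.range R).filter P).card ≤
      ((Finset.range R).filter (fun r => 1 ≤ r ∧ r + 1 < R ∧ P r)).card + 2 := by
  have hsub : (Finset.range R).filter P ⊆
      (Finset.range R).filter (fun r => 1 ≤ r ∧ r + 1 < R ∧ P r) ∪ {0, R - 1} := by
    intro r hr
    simp only [Finset.mem_union, Finset.mem_filter, Finset.mem_range, Finset.mem_insert,
      Finset.mem_singleton] at hr ⊢
    by_cases h : 1 ≤ r ∧ r + 1 < R
    · left; exact ⟨hr.1, h.1, h.2, hr.2⟩
    · right; omega
  refine (Finset.card_le_card hsub).trans ((Finset.card_union_le _ _).trans ?_)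
  have := Finset.card_le_two (a := 0) (b := R - 1)
  omega

set_option maxHeartbeats 1000000 in
lemma caseB {L σ : ℝ} (hL : 0 < L) (hσ : σ ∈ Ioo (0:ℝ) 1) {v : ℝ → ℝ}
    (hrange : ∀ x ∈ Ioo 0 L, 0 ≤ v x ∧ v x ≤ 1)
    (hbv : BoundedVariationOn v (Ioo 0 L)) (hint : (∫ x in Ioo 0 L, v x) = σ * L) {a b : ℝ}
    (ha : Tendsto v (nhdsWithin 0 (Ioo 0 L)) (nhds a))
    (hb : Tendsto v (nhdsWithin L (Ioo 0 L)) (nhds b))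
    (hzero : volume {x ∈ Ioo 0 L | 0 < v x ∧ v x < 1} = 0) {ε : ℝ} (hε : 0 < ε) :
    ∃ η > 0, ∀ᶠ n : ℕ in atTop, ∀ k : ℕ, |(k:ℝ) - σ * L * (n:ℝ)^2| ≤ η * (n:ℝ)^2 →
      ∃ w, Good L v a b n k ε w := by
  have ib : ∀ y : ℝ, 0 ≤ y → y ≤ 1 → |(id y)| ≤ 1 := fun y h0 h => by
    rw [id, abs_of_nonneg h0]; exact h
  set η := min (min (σ * L) ((1 - σ) * L)) ε / 8 with hη
  have hs1 : 0 < σ * L := mul_pos hσ.1 hL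
  have hs2 : 0 < (1 - σ) * L := mul_pos (by linarith [hσ.2]) hL
  have hη0 : 0 < η := by positivity
  have hη1 : 8 * η ≤ σ * L := by
    have := (min_le_left (min (σ * L) ((1 - σ) * L)) ε).trans (min_le_left _ _)
    rw [hη]; linarith
  have hη2 : 8 * η ≤ (1 - σ) * L := by
    have := (min_le_left (min (σ * L) ((1 - σ) * L)) ε).trans (min_le_right _ _)
    rw [hη]; linarith
  have hη3 : 8 * η ≤ ε := by
    have := (min_le_right (min (σ * L) ((1 - σ) * L)) ε)
    rw [hη]; linarith
  refine ⟨η, hη0, ?_⟩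
  have ts := sum_lim hL hrange hbv id continuous_id ib
  simp only [id] at ts
  rw [hint] at ts
  have ts := ts.eventually (Metric.closedBall_mem_nhds _ hη0)
  have ta := (vs_zero hL ha).eventually (Metric.closedBall_mem_nhds a hε)
  have tb := (vs_last hL hb).eventually (Metric.closedBall_mem_nhds b hε)
  have tC := (inv_tendsto 2).eventually (gt_mem_nhds hη0)
  have tR := (R_tendsto hL).eventually (lt_mem_nhds (show L - η < L by linarith))
  filter_upwards [ts, ta, tb, tC, tR, R_large hL 3, eventually_gt_atTop 0] with n ts ta tb tC tR hR hn k hk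
  have hn' : (0:ℝ) < n := by exact_mod_cast hn
  have vr := vs_range hL hrange hn (by omega : 1 ≤ ⌊L * (n:ℝ)⌋₊)
  have hpart := vs_part hL hrange hn
  have hlast := vs_last_eq L v n
  have hvar := vs_var hL hbv hn (by omega : 1 ≤ ⌊L * (n:ℝ)⌋₊) ⌊L * (n:ℝ)⌋₊
  obtain ⟨_, ht⟩ := t_bounds hL hn
  unfold Good
  rw [hzero] at hpart ⊢
  set V := (eVariationOn v (Ioo 0 L)).toReal with hV
  set s := vs L v n with hs
  set R := ⌊L * (n:ℝ)⌋₊ with hRdef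
  set t := ⌊L * (n:ℝ)^2⌋₊ - n * R with htdef
  have hsv' : ∀ r < R, s r = 0 ∨ s r = 1 := by
    intro r hr
    by_contra hcon
    have hmem : r ∈ (Finset.range R).filter fun r => s r ≠ 0 ∧ s r ≠ 1 := by
      rw [Finset.mem_filter]
      exact ⟨Finset.mem_range.2 hr, by tauto⟩
    have h1 : 0 < ((Finset.range R).filter fun r => s r ≠ 0 ∧ s r ≠ 1).card :=
      Finset.card_pos.2 ⟨r, hmem⟩
    simp at hpart
    have := hpart hr
    tauto
  have hsv : ∀ r ≤ R, s r = 0 ∨ s r = 1 := by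
    intro r hr
    rcases hr.lt_or_eq with h | h
    · exact hsv' r h
    · rw [h, ← hlast]; exact hsv' _ (by omega)
  set w : ℕ → ℕ := fun r => if s r = 1 then n else 0 with hw
  have hws : ∀ r ≤ R, (w r : ℝ) = n * s r := by
    intro r hr
    rcases hsv r hr with h | h <;> simp [hw, h]
  have hw0n : ∀ r ≤ R, w r = 0 ∨ w r = n := by
    intro r hr
    simp only [hw]; split_ifs <;> simp
  have hS : ∑ r ∈ Finset.range R, (w r : ℝ) = n * ∑ r ∈ Finset.range R, s r := by
    rw [Finset.mul_sum]
    exact Finset.sum_congr rfl fun r hr => hws r (Finset.mem_range.1 hr).le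
  set S := ∑ r ∈ Finset.range R, s r with hSdef
  have cn : (((Finset.range R).filter fun r => w r = n).card : ℝ) = S := by
    rw [Finset.card_filter]
    push_cast
    apply Finset.sum_congr rfl
    intro r hr
    rcases hsv r (Finset.mem_range.1 hr).le with h | h
    · simp [hw, h]; omega
    · simp [hw, h]
  have cz : (((Finset.range R).filter fun r => w r = 0).card : ℝ) = R - S := by
    have : (R:ℝ) = ∑ r ∈ Finset.range R, (1:ℝ) := by simp
    rw [Finset.card_filter, this, hSdef, ← Finset.sum_sub_distrib]
    push_cast
    apply Finset.sum_congr rfl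
    intro r hr
    rcases hsv r (Finset.mem_range.1 hr).le with h | h
    · simp [hw, h]
    · simp [hw, h]; omega
  have ci := card_interior R (fun r => w r = n)
  have ci0 := card_interior R (fun r => w r = 0)
  have ci' : (((Finset.range R).filter fun r => w r = n).card : ℝ) ≤
      (((Finset.range R).filter (fun r => 1 ≤ r ∧ r + 1 < R ∧ w r = n)).card : ℝ) + 2 := by exact_mod_cast ci
  have ci0' : (((Finset.range R).filter fun r => w r = 0).card : ℝ) ≤
      (((Finset.range R).filter (fun r => 1 ≤ r ∧ r + 1 < R ∧ w r = 0)).card : ℝ) + 2 := by exact_mod_cast ci0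
  rw [cn] at ci'
  rw [cz] at ci0'
  rw [Real.dist_eq, one_div, inv_mul_eq_div, abs_le] at ts
  obtain ⟨ts1, ts2⟩ := ts
  have ts1 : (σ * L - η) * n ≤ S := by
    rw [← le_div_iff₀ hn']; linarith
  have ts2 : S ≤ (σ * L + η) * n := by
    rw [← div_le_iff₀ hn']; linarith
  rw [lt_div_iff₀ hn'] at tR
  rw [div_lt_iff₀ hn'] at tC
  rw [abs_le] at hk
  have hl1 : w R + t - n ≤ n := by
    have := hw0n R le_rfl
    omega
  set l := w R + t - n with hl
  have hl' : (l:ℝ) ≤ n := by exact_mod_cast hl1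
  have hl0 : (0:ℝ) ≤ l := Nat.cast_nonneg l
  have p1 : n * (8 * η * n) ≤ n * (σ * L * n) := by gcongr
  have p2 : n * (8 * η * n) ≤ n * ((1 - σ) * L * n) := by gcongr
  have p3 : n * (8 * η * n) ≤ n * (ε * n) := by gcongr
  have p4 : n * 2 < n * (η * n) := by gcongr
  have p5 : 0 < n * (η * n) := by positivity
  have p6 : n * ((σ * L - η) * n) ≤ n * S := by gcongr
  have p7 : n * S ≤ n * ((σ * L + η) * n) := by gcongr
  have hlk : l ≤ k := by
    have : (l:ℝ) ≤ k := by linarith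
    exact_mod_cast this
  have hdiff : |((k - l : ℕ):ℝ) - ∑ r ∈ Finset.range R, (w r : ℝ)| ≤ 3 * η * (n:ℝ)^2 := by
    rw [hS, Nat.cast_sub hlk, abs_le]
    constructor <;> linarith
  have hdiff' := abs_le.1 hdiff
  have p1' : 8 * η * n ≤ σ * L * n := by gcongr
  have p2' : 8 * η * n ≤ (1 - σ) * L * n := by gcongr
  have hexn : ∃ p < R, w p = n := by
    have : (0:ℝ) < (((Finset.range R).filter fun r => w r = n).card : ℝ) := by
      rw [cn]
      linarith
    have : 0 < ((Finset.range R).filter fun r => w r = n).card := by exact_mod_cast this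
    obtain ⟨p, hp⟩ := Finset.card_pos.1 this
    rw [Finset.mem_filter, Finset.mem_range] at hp
    exact ⟨p, hp.1, hp.2⟩
  have hex0 : ∃ p < R, w p = 0 := by
    have : (0:ℝ) < (((Finset.range R).filter fun r => w r = 0).card : ℝ) := by
      rw [cz]
      linarith
    have : 0 < ((Finset.range R).filter fun r => w r = 0).card := by exact_mod_cast this
    obtain ⟨p, hp⟩ := Finset.card_pos.1 this
    rw [Finset.mem_filter, Finset.mem_range] at hp
    exact ⟨p, hp.1, hp.2⟩
  obtain ⟨w', a1, a2, a3, a4, a5, a6⟩ := fill_both R n hn w (k - l) hw0n hexn hex0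
    (by
      have : ((k - l : ℕ) : ℝ) ≤ ((∑ r ∈ Finset.range R, w r +
        n * ((Finset.range R).filter (fun r => 1 ≤ r ∧ r + 1 < R ∧ w r = 0)).card : ℕ) : ℝ) := by
        push_cast
        have q : n * ((R:ℝ) - S - 2) ≤ n * (((Finset.range R).filter (fun r => 1 ≤ r ∧ r + 1 < R ∧ w r = 0)).card : ℝ) := by
          gcongr; linarith
        have q2 : n * ((L - η) * n) ≤ (n:ℝ) * R := by gcongr
        rw [pow_two] at hdiff'
        linarith [hdiff'.2]
      exact_mod_cast this)
    (by
      have : ((∑ r ∈ Finset.range R, w r : ℕ) : ℝ) ≤ ((k - l +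
        n * ((Finset.range R).filter (fun r => 1 ≤ r ∧ r + 1 < R ∧ w r = n)).card : ℕ) : ℝ) := by
        push_cast
        have q : n * (S - 2) ≤ n * (((Finset.range R).filter (fun r => 1 ≤ r ∧ r + 1 < R ∧ w r = n)).card : ℝ) := by
          gcongr; linarith
        rw [pow_two] at hdiff'
        linarith [hdiff'.1]
      exact_mod_cast this)
  have hwR : w' R = w R := a1 R le_rfl (by omega)
  have bnd : ∀ r ≤ R, ∀ c, w' r = w r → dist (s r) c ≤ ε → |(w' r : ℝ) - n * c| ≤ ε * n := by
    intro r hr c h1 h2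
    rw [h1, hws r hr, ← mul_sub, abs_mul, abs_of_pos hn', mul_comm ε]
    gcongr
    exact h2
  refine ⟨w', a2, ?_, ?_, bnd 0 (by omega) a (a1 0 (by omega) (by omega)) ta,
    bnd (R-1) (by omega) b (a1 (R-1) (by omega) (by omega)) (by rw [hlast]; exact tb),
    bnd R le_rfl b hwR tb, ?_⟩
  · unfold cnt
    rw [a3, hwR, ← hl]
    omega
  · have a5' : (((Finset.range R).filter fun r => 0 < w' r ∧ w' r < n).card : ℝ) ≤ 1 := by exact_mod_cast a5
    have e1 : ∑ r ∈ Finset.range R, |(w (r+1) : ℝ) - w r| = n * ∑ r ∈ Finset.range R, |s (r+1) - s r| := by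
      rw [Finset.mul_sum]
      apply Finset.sum_congr rfl
      intro r hr
      rw [hws r (Finset.mem_range.1 hr).le, hws (r+1) (Finset.mem_range.1 hr), ← mul_sub, abs_mul,
        abs_of_pos hn']
    have e2 : n * ∑ r ∈ Finset.range R, |s (r+1) - s r| ≤ n * V := by gcongr
    have e3 : η * n ≤ ε * n := by gcongr; linarith
    simp only [ENNReal.toReal_zero]
    linarith
  · have e1 : ∑ r ∈ Finset.range R, |(w' r : ℝ) - n * s r| = ∑ r ∈ Finset.range R, |(w' r : ℝ) - w r| := by
      apply Finset.sum_congr rfl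
      intro r hr
      rw [hws r (Finset.mem_range.1 hr).le]
    rw [e1, a6]
    refine hdiff.trans ?_
    gcongr
    linarith


lemma Good.mono {L : ℝ} {v : ℝ → ℝ} {a b : ℝ} {n k : ℕ} {ε ε' : ℝ} {w : ℕ → ℕ}
    (h : Good L v a b n k ε w) (hε : ε ≤ ε') : Good L v a b n k ε' w := by
  obtain ⟨h1, h2, h3, h4, h5, h6, h7⟩ := h
  have : ε * n ≤ ε' * n := by gcongr
  exact ⟨h1, h2, h3.trans (by gcongr), h4.trans this, h5.trans this, h6.trans this,
    h7.trans (by gcongr)⟩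

lemma diagonal {α : Type} [Inhabited α] (P : ℕ → ℝ → α → Prop)
    (hm : ∀ m ε ε' w, P m ε w → ε ≤ ε' → P m ε' w)
    (h : ∀ ε > 0, ∀ᶠ m in atTop, ∃ w, P m ε w) :
    ∃ W : ℕ → α, ∀ ε > 0, ∀ᶠ m in atTop, P m ε (W m) := by
  let Q : ℕ → ℕ → Prop := fun m j => ∃ w, P m (1 / ((j:ℝ) + 1)) w
  let J : ℕ → ℕ := fun m => Nat.findGreatest (Q m) m
  refine ⟨fun m => if h : Q m (J m) then h.choose else default, ?_⟩
  intro ε hε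
  obtain ⟨j, hj⟩ := exists_nat_one_div_lt hε
  filter_upwards [h (1 / ((j:ℝ)+1)) (by positivity), eventually_ge_atTop j] with m hm1 hm2
  have hQ : Q m j := hm1
  have h1 : j ≤ J m := Nat.le_findGreatest hm2 hQ
  have h2 : Q m (J m) := Nat.findGreatest_spec hm2 hQ
  rw [dif_pos h2]
  refine hm _ _ _ _ h2.choose_spec (le_trans ?_ hj.le)
  have : (j:ℝ) ≤ J m := by exact_mod_cast h1
  gcongr

lemma ev_lt_iff {n x y : ℕ → ℕ} {X Y : ℝ} (hn : Tendsto n atTop atTop)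
    (hx : Tendsto (fun m => (x m : ℝ) / n m) atTop (nhds X))
    (hy : Tendsto (fun m => (y m : ℝ) / n m) atTop (nhds Y)) (hne : X ≠ Y) :
    ∀ᶠ m in atTop, (x m < y m ↔ X < Y) := by
  have hpos := hn.eventually_gt_atTop 0
  rcases lt_or_gt_of_ne hne with h | h
  · filter_upwards [hx.eventually_lt hy h, hpos] with m h1 h2
    have h2' : (0:ℝ) < n m := by exact_mod_cast h2
    rw [div_lt_div_iff_of_pos_right h2'] at h1
    have : x m < y m := by exact_mod_cast h1
    tauto
  · filter_upwards [hy.eventually_lt hx h, hpos] with m h1 h2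
    have h2' : (0:ℝ) < n m := by exact_mod_cast h2
    rw [div_lt_div_iff_of_pos_right h2'] at h1
    have h3 : y m < x m := by exact_mod_cast h1
    constructor
    · intro h4; omega
    · intro h4; linarith

lemma Bterm_bound (n t w0 W1 W2 d : ℕ) : |Bterm n t w0 W1 W2 d| ≤ 1 := by
  unfold Bterm
  split_ifs <;> norm_num

set_option maxHeartbeats 1000000 in
lemma phi_limit {n t w0 W1 W2 : ℕ → ℕ} {τ a b : ℝ} (hτ : τ ∈ Icc (0:ℝ) 1) (ha : a ≤ 1)
    (hn : Tendsto n atTop atTop)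
    (ht : Tendsto (fun m => (t m : ℝ) / n m) atTop (nhds τ))
    (htn : ∀ᶠ m in atTop, t m < n m)
    (h0 : Tendsto (fun m => (w0 m : ℝ) / n m) atTop (nhds a))
    (h1 : Tendsto (fun m => (W1 m : ℝ) / n m) atTop (nhds b))
    (h2 : Tendsto (fun m => (W2 m : ℝ) / n m) atTop (nhds b)) :
    Tendsto (fun m => (1 / (n m : ℝ)) * ∑ d ∈ Finset.range (n m), Bterm (n m) (t m) (w0 m) (W1 m) (W2 m) d)
      atTop (nhds (phi τ a b)) := by
  have hpos := hn.eventually_gt_atTop 0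
  set A := Set.Icc (-τ) (a - τ) ∪ Set.Icc (1 - τ) (a + 1 - τ) with hA
  set S := Set.Icc (0 : ℝ) 1 ∩ symmDiff A (Set.Icc 0 b) with hS
  have hSm : MeasurableSet S := by
    apply measurableSet_Icc.inter
    exact ((measurableSet_Icc.union measurableSet_Icc).symmDiff measurableSet_Icc)
  have hphi : phi τ a b = ∫ s in (0:ℝ)..1, S.indicator (fun _ => (1:ℝ)) s := by
    rw [intervalIntegral.integral_of_le zero_le_one, ← integral_Icc_eq_integral_Ioc,
      setIntegral_indicator hSm]
    have : Icc (0:ℝ) 1 ∩ S = S := by rw [hS, ← inter_assoc, inter_self]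
    rw [this]
    simp [phi, hS, hA, Measure.real]
  rw [hphi]
  have key : Tendsto (fun m => ∫ s in (0:ℝ)..1, Bterm (n m) (t m) (w0 m) (W1 m) (W2 m) ⌊(n m : ℝ) * s⌋₊)
      atTop (nhds (∫ s in (0:ℝ)..1, S.indicator (fun _ => (1:ℝ)) s)) := by
    apply intervalIntegral.tendsto_integral_filter_of_dominated_convergence (fun _ => (1:ℝ))
    · filter_upwards with m
      exact ((Measurable.of_discrete (f := Bterm (n m) (t m) (w0 m) (W1 m) (W2 m))).comp
        (Nat.measurable_floor.comp (measurable_const_mul _))).aestronglyMeasurable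
    · filter_upwards with m
      filter_upwards with s hs
      exact Bterm_bound _ _ _ _ _ _
    · simp
    · have hfin : ({b, a - τ, a + 1 - τ, 1 - τ, 1} : Set ℝ).Finite := by simp
      have hnull := hfin.measure_zero volume
      rw [measure_eq_zero_iff_ae_notMem] at hnull
      filter_upwards [hnull] with s hs hs1
      rw [uIoc_of_le zero_le_one] at hs1
      simp only [mem_insert_iff, mem_singleton_iff, not_or] at hs
      obtain ⟨e1, e2, e3, e4, e5⟩ := hs
      have s0 : 0 < s := hs1.1
      have s1 : s < 1 := lt_of_le_of_ne hs1.2 e5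
      have hd : Tendsto (fun m => (⌊(n m : ℝ) * s⌋₊ : ℝ) / n m) atTop (nhds s) := by
        have := (tendsto_nat_floor_mul_div_atTop (R := ℝ) s0.le).comp
          (tendsto_natCast_atTop_atTop.comp hn)
        refine this.congr fun m => ?_
        simp [mul_comm]
      have hdt : Tendsto (fun m => ((⌊(n m : ℝ) * s⌋₊ + t m : ℕ) : ℝ) / n m) atTop (nhds (s + τ)) := by
        refine (hd.add ht).congr fun m => ?_
        push_cast; rw [add_div]
      have hnn : Tendsto (fun m => (n m : ℝ) / n m) atTop (nhds 1) := by
        refine tendsto_const_nhds.congr' ?_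
        filter_upwards [hpos] with m hm
        rw [div_self]
        exact_mod_cast hm.ne'
      have hwn : Tendsto (fun m => ((w0 m + n m : ℕ) : ℝ) / n m) atTop (nhds (a + 1)) := by
        refine (h0.add hnn).congr fun m => ?_
        push_cast; rw [add_div]
      have q1 := ev_lt_iff hn hdt hnn (by intro h; apply e4; linarith)
      have q2 := ev_lt_iff hn hdt h0 (by intro h; apply e2; linarith)
      have q3 := ev_lt_iff hn hdt hwn (by intro h; apply e3; linarith)
      have q4 := ev_lt_iff hn hd h1 e1
      have q5 := ev_lt_iff hn hd h2 e1
      refine tendsto_const_nhds.congr' ?_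
      filter_upwards [q1, q2, q3, q4, q5, htn] with m q1 q2 q3 q4 q5 htn
      have hb : s ∈ Icc 0 b ↔ s < b :=
        ⟨fun h => lt_of_le_of_ne h.2 e1, fun h => ⟨s0.le, h.le⟩⟩
      have hind : S.indicator (fun _ => (1:ℝ)) s = ((if s ∈ A then (1:ℝ) else 0) - (if s < b then 1 else 0))^2 := by
        have hmem : s ∈ S ↔ (s ∈ A ∧ ¬ s < b) ∨ (s < b ∧ s ∉ A) := by
          rw [hS, mem_inter_iff, mem_symmDiff, hb]
          have : s ∈ Icc (0:ℝ) 1 := ⟨s0.le, s1.le⟩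
          exact ⟨fun h => h.2, fun h => ⟨this, h⟩⟩
        rw [indicator_apply]
        by_cases c1 : s ∈ A <;> by_cases c2 : s < b <;> simp [hmem, c1, c2]
      rw [hind]
      unfold Bterm
      by_cases c : s + τ < 1
      · have c' := q1.2 c
        rw [if_pos (show ⌊(n m : ℝ) * s⌋₊ < n m - t m by omega)]
        have hAs : s ∈ A ↔ s + τ < a := by
          rw [hA]
          constructor
          · rintro (h | h)
            · refine lt_of_le_of_ne (by linarith [h.2]) (by intro h; apply e2; linarith)
            · linarith [h.1]
          · intro h; left; constructor <;> linarith [hτ.1]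
        simp only [hAs, q2, q4]
      · have c' : ¬ (⌊(n m : ℝ) * s⌋₊ + t m < n m) := fun h => c (q1.1 h)
        rw [if_neg (show ¬ ⌊(n m : ℝ) * s⌋₊ < n m - t m by omega)]
        have hAs : s ∈ A ↔ s + τ < a + 1 := by
          rw [hA]
          constructor
          · rintro (h | h)
            · exfalso; exact e4 (le_antisymm (by linarith [h.2]) (by linarith))
            · refine lt_of_le_of_ne (by linarith [h.2]) (by intro h; apply e3; linarith)
          · intro h; right; constructor <;> linarith
        have q3' : (⌊(n m : ℝ) * s⌋₊ + t m - n m < w0 m) ↔ s + τ < a + 1 := by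
          rw [← q3]; omega
        simp only [hAs, q3', q5]
  refine key.congr' ?_
  filter_upwards [hpos] with m hm
  have := floor_integral (Bterm (n m) (t m) (w0 m) (W1 m) (W2 m)) hm (n m)
  rw [div_self (by exact_mod_cast hm.ne')] at this
  exact this


lemma stepFun_site {n : ℕ} (hn : 0 < n) (u : ℕ → ℝ) (j : ℕ) {x : ℝ}
    (hx : x ∈ Ioo ((j:ℝ)/(n:ℝ)^2) (((j+1:ℕ):ℝ)/(n:ℝ)^2)) : stepFun n u x = u (j+1) := by
  have hn' : (0:ℝ) < (n:ℝ)^2 := by positivity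
  obtain ⟨h1, h2⟩ := hx
  rw [div_lt_iff₀ hn'] at h1
  rw [lt_div_iff₀ hn'] at h2
  unfold stepFun
  have : ⌈(n:ℝ)^2 * x⌉ = ((j+1:ℕ):ℤ) := by
    rw [Int.ceil_eq_iff]
    push_cast at h2 ⊢
    constructor <;> linarith
  rw [this, Int.toNat_natCast]

lemma stepFun_meas (n : ℕ) (u : ℕ → ℝ) : Measurable (stepFun n u) := by
  have h1 : Measurable (fun z : ℤ => u z.toNat) := Measurable.of_discrete
  exact h1.comp (Int.measurable_ceil.comp (measurable_const_mul _))

lemma row_stepFun {n N R t : ℕ} (hn : 0 < n) (w : ℕ → ℕ) (hN : N = n * R + t)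
    (r : ℕ) (hr : r < R) (hw : w r ≤ n) :
    ∫ x in ((r:ℝ)/n)..(((r:ℝ)+1)/n), stepFun n (UU n N w) x = (w r : ℝ) / (n:ℝ)^2 := by
  have hn' : (0:ℝ) < n := by exact_mod_cast hn
  have hp : ∀ c < n, IntervalIntegrable (stepFun n (UU n N w)) volume
      (((n * r + c : ℕ):ℝ)/(n:ℝ)^2) (((n * r + (c + 1) : ℕ):ℝ)/(n:ℝ)^2) ∧
      ∫ x in (((n * r + c : ℕ):ℝ)/(n:ℝ)^2)..(((n * r + (c + 1) : ℕ):ℝ)/(n:ℝ)^2), stepFun n (UU n N w) x =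
      ((((n * r + (c + 1) : ℕ):ℝ)/(n:ℝ)^2) - (((n * r + c : ℕ):ℝ)/(n:ℝ)^2)) *
        (if n ≤ c + w r then 1 else 0) := by
    intro c hc
    apply const_piece
    · gcongr; omega
    · intro x hx
      rw [stepFun_site hn _ (n * r + c) hx, UU_succ, FF_row w r hc]
      have : n * (r + 1) ≤ n * R := Nat.mul_le_mul_left n hr
      rw [mul_add] at this
      omega
  have := intervalIntegral.sum_integral_adjacent_intervals
    (a := fun c : ℕ => ((n * r + c : ℕ):ℝ)/(n:ℝ)^2) (n := n) (f := stepFun n (UU n N w)) (μ := volume)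
    (fun c hc => (hp c hc).1)
  rw [Finset.sum_congr rfl (fun c hc => (hp c (Finset.mem_range.1 hc)).2)] at this
  have e0 : ((n * r + 0 : ℕ):ℝ)/(n:ℝ)^2 = (r:ℝ)/n := by push_cast; field_simp; simp
  have e1 : ((n * r + n : ℕ):ℝ)/(n:ℝ)^2 = ((r:ℝ)+1)/n := by push_cast; field_simp
  rw [e0, e1] at this
  rw [← this]
  have e2 : ∀ c ∈ Finset.range n, ((((n * r + (c + 1) : ℕ):ℝ)/(n:ℝ)^2) - (((n * r + c : ℕ):ℝ)/(n:ℝ)^2)) *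
        (if n ≤ c + w r then (1:ℝ) else 0) = (1 / (n:ℝ)^2) * (if n ≤ c + w r then (1:ℝ) else 0) := by
    intro c _
    congr 1
    push_cast; field_simp; ring
  rw [Finset.sum_congr rfl e2, ← Finset.mul_sum, row_count, Nat.add_sub_cancel, min_eq_right hw]
  ring

lemma UU_01 (n N : ℕ) (w : ℕ → ℕ) (i : ℕ) : 0 ≤ UU n N w i ∧ UU n N w i ≤ 1 := by
  unfold UU
  split_ifs
  · rcases FF_01 n w (i-1) with h | h <;> rw [h] <;> norm_num
  · norm_num

set_option maxHeartbeats 1000000 in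
lemma row_est {L : ℝ} (hL : 0 < L) {v : ℝ → ℝ} (hrange : ∀ x ∈ Ioo 0 L, 0 ≤ v x ∧ v x ≤ 1)
    {n : ℕ} (hn : 0 < n) (hR : 1 ≤ ⌊L * (n:ℝ)⌋₊) (w : ℕ → ℕ) (hw : ∀ r ≤ ⌊L * (n:ℝ)⌋₊, w r ≤ n)
    {ε M ω : ℝ}
    (hs : ∑ r ∈ Finset.range ⌊L * (n:ℝ)⌋₊, |(w r : ℝ) - n * vs L v n r| ≤ ε * (n:ℝ)^2)
    (h : ℝ → ℝ) (hc : Continuous h) (hM : ∀ x, |h x| ≤ M) (hω0 : 0 ≤ ω)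
    (hω : ∀ x y, |x - y| ≤ 1 / (n:ℝ) → |h x - h y| ≤ ω) :
    |∫ x in Ioo 0 L, (stepFun n (UU n ⌊L * (n:ℝ)^2⌋₊ w) x - vs L v n ⌊(n:ℝ) * x⌋₊) * h x| ≤
      M * ε + L * ω + M / n := by
  have hn' : (0:ℝ) < n := by exact_mod_cast hn
  have hM0 : 0 ≤ M := (abs_nonneg _).trans (hM 0)
  have vr := vs_range hL hrange hn hR
  obtain ⟨ht1, ht2⟩ := t_bounds hL hn
  have hRle : (⌊L * (n:ℝ)⌋₊ : ℝ) ≤ L * n := Nat.floor_le (by positivity)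
  have hRlt := Nat.lt_floor_add_one (L * (n:ℝ))
  set R := ⌊L * (n:ℝ)⌋₊ with hRdef
  set N := ⌊L * (n:ℝ)^2⌋₊ with hNdef
  set U := stepFun n (UU n N w) with hU
  set V : ℝ → ℝ := fun x => vs L v n ⌊(n:ℝ) * x⌋₊ with hV
  have hUm : Measurable U := stepFun_meas _ _
  have hVm : Measurable V := vs_meas L v n
  have hU01 : ∀ x, 0 ≤ U x ∧ U x ≤ 1 := fun x => UU_01 n N w _
  have hD1 : ∀ x, |U x - V x| ≤ 1 := fun x => by
    have h1 := hU01 x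
    have h2 := vr ⌊(n:ℝ) * x⌋₊
    rw [abs_le]; constructor <;> simp only [hV] <;> linarith
  have hDi : ∀ p q : ℝ, IntervalIntegrable (fun x => U x - V x) volume p q := by
    intro p q
    rw [intervalIntegrable_iff]
    have : IsFiniteMeasure (volume.restrict (uIoc p q)) := ⟨by simp [uIoc]⟩
    refine Integrable.of_bound (hUm.sub hVm).aestronglyMeasurable 1 ?_
    filter_upwards with x
    exact hD1 x
  have hUi : ∀ p q : ℝ, IntervalIntegrable U volume p q := by
    intro p q
    rw [intervalIntegrable_iff]
    have : IsFiniteMeasure (volume.restrict (uIoc p q)) := ⟨by simp [uIoc]⟩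
    refine Integrable.of_bound hUm.aestronglyMeasurable 1 ?_
    filter_upwards with x
    rw [Real.norm_eq_abs, abs_of_nonneg (hU01 x).1]; exact (hU01 x).2
  have hVi : ∀ p q : ℝ, IntervalIntegrable V volume p q := by
    intro p q
    have := (hUi p q).sub (hDi p q)
    refine this.congr ?_
    intro x _
    simp
  have hDh : ∀ p q : ℝ, IntervalIntegrable (fun x => (U x - V x) * h x) volume p q :=
    fun p q => (hDi p q).mul_continuousOn hc.continuousOn
  have hrow : ∀ r < R, |∫ x in ((r:ℝ)/n)..(((r:ℝ)+1)/n), (U x - V x) * h x| ≤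
      M / (n:ℝ)^2 * |(w r : ℝ) - n * vs L v n r| + ω / n := by
    intro r hr
    have hlen : ((r:ℝ)+1)/n - (r:ℝ)/n = 1 / n := by ring
    have hle : (r:ℝ)/n ≤ ((r:ℝ)+1)/n := by gcongr; linarith
    have hsplit : ∫ x in ((r:ℝ)/n)..(((r:ℝ)+1)/n), (U x - V x) * h x =
        (∫ x in ((r:ℝ)/n)..(((r:ℝ)+1)/n), (U x - V x)) * h ((r:ℝ)/n) +
        ∫ x in ((r:ℝ)/n)..(((r:ℝ)+1)/n), (U x - V x) * (h x - h ((r:ℝ)/n)) := by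
      rw [← intervalIntegral.integral_mul_const, ← intervalIntegral.integral_add]
      · congr 1; ext x; ring
      · exact (hDi _ _).mul_const _
      · exact (hDi _ _).mul_continuousOn (by fun_prop)
    have hUr : ∫ x in ((r:ℝ)/n)..(((r:ℝ)+1)/n), U x = (w r : ℝ) / (n:ℝ)^2 :=
      row_stepFun (t := N - n * R) hn w (by omega) r hr (hw r hr.le)
    have hVr : ∫ x in ((r:ℝ)/n)..(((r:ℝ)+1)/n), V x = (((r:ℝ)+1)/n - (r:ℝ)/n) * vs L v n r := by
      refine (const_piece hle ?_).2
      intro x hx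
      simp only [hV]
      rw [floor_mul_of_mem hn hx.1.le hx.2]
    have hfirst : ∫ x in ((r:ℝ)/n)..(((r:ℝ)+1)/n), (U x - V x) =
        ((w r : ℝ) - n * vs L v n r) / (n:ℝ)^2 := by
      rw [intervalIntegral.integral_sub (hUi _ _) (hVi _ _), hUr, hVr, hlen]
      field_simp
    rw [hsplit, hfirst]
    refine (abs_add_le _ _).trans (add_le_add ?_ ?_)
    · rw [abs_mul, abs_div, abs_of_pos (show (0:ℝ) < (n:ℝ)^2 by positivity), div_mul_eq_mul_div,
        div_mul_eq_mul_div, mul_comm]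
      gcongr
      exact hM _
    · have := intervalIntegral.norm_integral_le_of_norm_le_const (a := (r:ℝ)/n) (b := ((r:ℝ)+1)/n)
        (f := fun x => (U x - V x) * (h x - h ((r:ℝ)/n))) (C := ω) (fun x hx => by
          rw [uIoc_of_le hle] at hx
          rw [Real.norm_eq_abs, abs_mul]
          have h1 := hD1 x
          have h2 := hω x ((r:ℝ)/n) (by
            rw [abs_of_nonneg (by linarith [hx.1])]
            linarith [hx.2])
          calc |U x - V x| * |h x - h ((r:ℝ)/n)| ≤ 1 * ω := by gcongr
            _ = ω := one_mul _)
      rw [hlen, abs_of_pos (by positivity), Real.norm_eq_abs] at this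
      refine this.trans (le_of_eq ?_)
      ring
  have hsum : ∑ r ∈ Finset.range R, ∫ x in ((r:ℝ)/n)..(((r:ℝ)+1)/n), (U x - V x) * h x =
      ∫ x in (0:ℝ)..((R:ℝ)/n), (U x - V x) * h x := by
    have := intervalIntegral.sum_integral_adjacent_intervals
      (a := fun r : ℕ => (r:ℝ)/n) (n := R) (f := fun x => (U x - V x) * h x) (μ := volume)
      (fun r _ => hDh _ _)
    simp only [Nat.cast_zero, zero_div] at this
    rw [← this]
    simp
  have hRL : (R:ℝ)/n ≤ L := by rw [div_le_iff₀ hn']; exact hRle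
  have hlast : |∫ x in ((R:ℝ)/n)..L, (U x - V x) * h x| ≤ M / n := by
    have := intervalIntegral.norm_integral_le_of_norm_le_const (a := (R:ℝ)/n) (b := L)
      (f := fun x => (U x - V x) * h x) (C := M) (fun x hx => by
        rw [Real.norm_eq_abs, abs_mul]
        have h1 := hD1 x
        have h2 := hM x
        calc |U x - V x| * |h x| ≤ 1 * M := by gcongr
            _ = M := one_mul _)
    rw [Real.norm_eq_abs, abs_of_nonneg (sub_nonneg.2 hRL)] at this
    refine this.trans ?_
    rw [div_eq_mul_inv M (n:ℝ)]
    refine mul_le_mul_of_nonneg_left ?_ hM0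
    rw [← one_div, sub_le_iff_le_add, ← add_div, le_div_iff₀ hn']
    linarith
  rw [← integral_Ioc_eq_integral_Ioo, ← intervalIntegral.integral_of_le hL.le,
    ← intervalIntegral.integral_add_adjacent_intervals (hDh 0 ((R:ℝ)/n)) (hDh ((R:ℝ)/n) L), ← hsum]
  refine (abs_add_le _ _).trans (add_le_add ?_ hlast)
  refine (Finset.abs_sum_le_sum_abs _ _).trans ?_
  refine (Finset.sum_le_sum fun r hr => hrow r (Finset.mem_range.1 hr)).trans ?_
  rw [Finset.sum_add_distrib, ← Finset.mul_sum, Finset.sum_const, Finset.card_range, nsmul_eq_mul]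
  apply add_le_add
  · calc M / (n:ℝ)^2 * ∑ r ∈ Finset.range R, |(w r : ℝ) - n * vs L v n r| ≤ M / (n:ℝ)^2 * (ε * (n:ℝ)^2) := by
          gcongr
      _ = M * ε := by field_simp
  · calc (R:ℝ) * (ω / n) ≤ (L * n) * (ω / n) := by gcongr
      _ = L * ω := by field_simp

lemma weak_diff {L : ℝ} (hL : 0 < L) {v : ℝ → ℝ} (hrange : ∀ x ∈ Ioo 0 L, 0 ≤ v x ∧ v x ≤ 1)
    {a b : ℝ} {n k : ℕ → ℕ} (hn : Tendsto n atTop atTop) (w : ℕ → ℕ → ℕ)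
    (hg : ∀ ε > 0, ∀ᶠ m in atTop, Good L v a b (n m) (k m) ε (w m))
    (g : ℝ → ℝ) (hgi : IntegrableOn g (Ioo 0 L)) :
    Tendsto (fun m => ∫ x in Ioo 0 L, (stepFun (n m) (UU (n m) ⌊L * (n m:ℝ)^2⌋₊ (w m)) x -
      vs L v (n m) ⌊(n m:ℝ) * x⌋₊) * g x) atTop (nhds 0) := by
  rw [Metric.tendsto_nhds]
  intro e he
  obtain ⟨h, hcs, hgh, hc, hint⟩ := hgi.exists_hasCompactSupport_integral_sub_le
    (show 0 < e / 2 by positivity)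
  obtain ⟨M, hM⟩ := hc.bounded_above_of_compact_support hcs
  have hM0 : 0 ≤ M := (norm_nonneg _).trans (hM 0)
  have huc := hcs.uniformContinuous_of_continuous hc
  set ε := e / (16 * (M + 1)) with hε
  have hε0 : 0 < ε := by positivity
  set ω := e / (16 * (L + 1)) with hω
  have hω0 : 0 < ω := by positivity
  obtain ⟨δ, hδ, hunif⟩ := Metric.uniformContinuous_iff.1 huc ω hω0
  have t1 := ((inv_tendsto 1).comp hn).eventually (gt_mem_nhds hδ)
  have t2 := ((inv_tendsto M).comp hn).eventually (gt_mem_nhds (show 0 < e / 16 by positivity))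
  filter_upwards [hg ε hε0, hn.eventually_gt_atTop 0, hn.eventually (R_large hL 1), t1, t2] with
    m hG hnm hR t1 t2
  simp only [Function.comp_def] at t1 t2
  have hest := row_est hL hrange hnm hR (w m) hG.1 hG.2.2.2.2.2.2 h hc hM hω0.le (by
    intro x y hxy
    exact (hunif (lt_of_le_of_lt hxy t1)).le)
  have vr := vs_range hL hrange hnm hR
  set U := stepFun (n m) (UU (n m) ⌊L * (n m:ℝ)^2⌋₊ (w m)) with hU
  set V : ℝ → ℝ := fun x => vs L v (n m) ⌊(n m:ℝ) * x⌋₊ with hV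
  have hUm : Measurable U := stepFun_meas _ _
  have hVm : Measurable V := vs_meas L v (n m)
  have hD1 : ∀ x, |U x - V x| ≤ 1 := fun x => by
    have h1 : 0 ≤ U x ∧ U x ≤ 1 := UU_01 _ _ _ _
    have h2 := vr ⌊(n m:ℝ) * x⌋₊
    rw [abs_le]; constructor <;> simp only [hV] <;> linarith
  have i1 : IntegrableOn (fun x => (U x - V x) * h x) (Ioo 0 L) :=
    hint.bdd_mul (c := 1) (hUm.sub hVm).aestronglyMeasurable (Eventually.of_forall hD1)
  have i2 : IntegrableOn (fun x => (U x - V x) * (g x - h x)) (Ioo 0 L) :=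
    (hgi.sub hint).bdd_mul (c := 1) (hUm.sub hVm).aestronglyMeasurable (Eventually.of_forall hD1)
  have hsplit : ∫ x in Ioo 0 L, (U x - V x) * g x =
      (∫ x in Ioo 0 L, (U x - V x) * h x) + ∫ x in Ioo 0 L, (U x - V x) * (g x - h x) := by
    rw [← integral_add i1 i2]
    congr 1; ext x; ring
  have hsecond : |∫ x in Ioo 0 L, (U x - V x) * (g x - h x)| ≤ e / 2 := by
    refine le_trans ?_ hgh
    rw [← Real.norm_eq_abs]
    refine norm_integral_le_of_norm_le (hgi.sub hint).norm ?_
    filter_upwards with x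
    rw [norm_mul]
    have := hD1 x
    calc ‖U x - V x‖ * ‖g x - h x‖ ≤ 1 * ‖g x - h x‖ := by gcongr; exact this
      _ = _ := one_mul _
  rw [Real.dist_eq, sub_zero]
  change |∫ x in Ioo 0 L, (U x - V x) * g x| < e
  rw [hsplit]
  have q1 : M * ε ≤ e / 16 := by
    rw [hε, mul_div_assoc', div_le_div_iff₀ (by positivity) (by positivity)]
    nlinarith
  have q2 : L * ω ≤ e / 16 := by
    rw [hω, mul_div_assoc', div_le_div_iff₀ (by positivity) (by positivity)]
    nlinarith
  refine lt_of_le_of_lt (abs_add_le _ _) ?_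
  linarith



lemma exists_good {L σ : ℝ} (hL : 0 < L) (hσ : σ ∈ Ioo (0:ℝ) 1) {nseq k : ℕ → ℕ}
    (hn : Tendsto nseq atTop atTop)
    (hklim : Tendsto (fun m => (k m : ℝ) / (L * (nseq m : ℝ) ^ 2)) atTop (nhds σ)) {v : ℝ → ℝ}
    (hrange : ∀ x ∈ Ioo 0 L, 0 ≤ v x ∧ v x ≤ 1)
    (hbv : BoundedVariationOn v (Ioo 0 L)) (hint : (∫ x in Ioo 0 L, v x) = σ * L) {a b : ℝ}
    (ha : Tendsto v (nhdsWithin 0 (Ioo 0 L)) (nhds a))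
    (hb : Tendsto v (nhdsWithin L (Ioo 0 L)) (nhds b)) :
    ∃ W : ℕ → ℕ → ℕ, ∀ ε > 0, ∀ᶠ m in atTop, Good L v a b (nseq m) (k m) ε (W m) := by
  refine diagonal (fun m ε w => Good L v a b (nseq m) (k m) ε w)
    (fun m ε ε' w h hle => h.mono hle) ?_
  intro ε hε
  have key : ∃ η > 0, ∀ᶠ n : ℕ in atTop, ∀ k : ℕ, |(k:ℝ) - σ * L * (n:ℝ)^2| ≤ η * (n:ℝ)^2 →
      ∃ w, Good L v a b n k ε w := by
    by_cases hz : volume {x ∈ Ioo 0 L | 0 < v x ∧ v x < 1} = 0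
    · exact caseB hL hσ hrange hbv hint ha hb hz hε
    · exact caseA hL hrange hbv hint ha hb (pos_iff_ne_zero.2 hz) hε
  obtain ⟨η, hη, hev⟩ := key
  have h1 := (Metric.tendsto_nhds.1 hklim) (η / L) (by positivity)
  filter_upwards [hn.eventually hev, h1, hn.eventually_gt_atTop 0] with m hm h1 hpos
  apply hm
  have hn' : (0:ℝ) < nseq m := by exact_mod_cast hpos
  rw [Real.dist_eq] at h1
  have e : (k m : ℝ) - σ * L * (nseq m:ℝ)^2 =
      ((k m : ℝ) / (L * (nseq m:ℝ)^2) - σ) * (L * (nseq m:ℝ)^2) := by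
    field_simp
  rw [e, abs_mul, abs_of_pos (show 0 < L * (nseq m:ℝ)^2 by positivity)]
  calc _ ≤ η / L * (L * (nseq m:ℝ)^2) := by gcongr
    _ = _ := by field_simp

lemma adm_of_good {L : ℝ} (hL : 0 < L) {v : ℝ → ℝ} {a b ε : ℝ} {n k : ℕ} {w : ℕ → ℕ} (hn : 0 < n)
    (hg : Good L v a b n k ε w) : AdmDisc L n k (UU n ⌊L * (n:ℝ)^2⌋₊ w) := by
  obtain ⟨t1, t2⟩ := t_bounds hL hn
  refine ⟨?_, ?_, ?_⟩
  · intro i hi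
    rw [Finset.mem_Icc] at hi
    unfold UU
    rw [if_pos hi]
    exact FF_01 _ _ _
  · intro i hi
    rw [Finset.mem_Icc] at hi
    unfold UU
    rw [if_neg hi]
  · exact UU_count w (R := ⌊L * (n:ℝ)⌋₊) (t := ⌊L * (n:ℝ)^2⌋₊ - n * ⌊L * (n:ℝ)⌋₊) (by omega) t2
      hg.1 hg.2.1

lemma adm_default {L : ℝ} {n k : ℕ} (hk : k ≤ ⌊L * (n:ℝ)^2⌋₊) :
    AdmDisc L n k (fun i => if 1 ≤ i ∧ i ≤ k then 1 else 0) := by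
  refine ⟨?_, ?_, ?_⟩
  · intro i _
    by_cases h : 1 ≤ i ∧ i ≤ k <;> simp [h]
  · intro i hi
    rw [Finset.mem_Icc] at hi
    exact if_neg (by omega)
  · have : ((Finset.Icc 1 ⌊L * (n:ℝ)^2⌋₊).filter fun i =>
        (if 1 ≤ i ∧ i ≤ k then (1:ℝ) else 0) = 1) = Finset.Icc 1 k := by
      ext i
      simp only [Finset.mem_filter, Finset.mem_Icc]
      constructor
      · rintro ⟨_, h⟩
        by_contra hc
        rw [if_neg hc] at h
        norm_num at h
      · intro h
        exact ⟨by omega, if_pos h⟩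
    rw [this]; simp

lemma div_tendsto_of_good {n : ℕ → ℕ} (hn : Tendsto n atTop atTop) {x : ℕ → ℕ} {c : ℝ}
    (h : ∀ ε > 0, ∀ᶠ m in atTop, |(x m : ℝ) - n m * c| ≤ ε * n m) :
    Tendsto (fun m => (x m : ℝ) / n m) atTop (nhds c) := by
  rw [Metric.tendsto_nhds]
  intro ε hε
  filter_upwards [h (ε/2) (by positivity), hn.eventually_gt_atTop 0] with m hm hp
  have hp' : (0:ℝ) < n m := by exact_mod_cast hp
  rw [Real.dist_eq]
  have e : (x m : ℝ) / n m - c = ((x m : ℝ) - n m * c) / n m := by field_simp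
  rw [e, abs_div, abs_of_pos hp', div_lt_iff₀ hp']
  have : ε / 2 * n m < ε * n m := by
    apply mul_lt_mul_of_pos_right _ hp'; linarith
  linarith

lemma energy_good {L : ℝ} (hL : 0 < L) {v : ℝ → ℝ} {a b ε C : ℝ} {n k : ℕ} {w : ℕ → ℕ} (hn : 0 < n)
    (hR : 2 ≤ ⌊L * (n:ℝ)⌋₊)
    (hC : C = 2 * (volume {x ∈ Ioo 0 L | 0 < v x ∧ v x < 1}).toReal +
        (eVariationOn v (Ioo 0 L)).toReal)
    (hg : Good L v a b n k ε w) :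
    energyPer L n (UU n ⌊L * (n:ℝ)^2⌋₊ w) ≤ C + ε + (2 * (C + ε) + 3) / n +
      (1 / (n:ℝ)) * ∑ d ∈ Finset.range n, Bterm n (⌊L * (n:ℝ)^2⌋₊ - n * ⌊L * (n:ℝ)⌋₊) (w 0)
        (w (⌊L * (n:ℝ)⌋₊ - 1)) (w ⌊L * (n:ℝ)⌋₊) d := by
  obtain ⟨t1, t2⟩ := t_bounds hL hn
  obtain ⟨g1, g2, g3, -⟩ := hg
  rw [← hC] at g3
  unfold energyPer
  generalize ⌊L * (n:ℝ)⌋₊ = R0 at *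
  generalize ⌊L * (n:ℝ)^2⌋₊ = N at *
  obtain ⟨R, rfl⟩ : ∃ R, R0 = R + 1 := ⟨R0 - 1, by omega⟩
  have hnN : n < N := by nlinarith
  have h := energy_det n R (N - n * (R+1)) t2 w g1 N (by omega) hnN
  have hn' : (0:ℝ) < n := by exact_mod_cast hn
  rw [Nat.add_sub_cancel]
  set P := (((Finset.range (R+1)).filter fun r => 0 < w r ∧ w r < n).card : ℝ) with hP
  set V := ∑ r ∈ Finset.range (R+1), |(w (r+1) : ℝ) - w r| with hV
  set B := ∑ d ∈ Finset.range n, Bterm n (N - n * (R+1)) (w 0) (w R) (w (R+1)) d with hB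
  have hP0 : 0 ≤ P := by positivity
  refine (mul_le_mul_of_nonneg_left h (by positivity)).trans ?_
  have e : 1 / (n:ℝ) * (2 * P + (1 + 2 / n) * V + 3 + B) =
      (2 * P + V) / n + (2 * (V / n) + 3) / n + 1 / (n:ℝ) * B := by
    field_simp; ring
  rw [e]
  have i1 : (2 * P + V) / n ≤ C + ε := by rw [div_le_iff₀ hn']; linarith
  have i2 : V / n ≤ C + ε := by rw [div_le_iff₀ hn']; linarith
  have i3 : (2 * (V / n) + 3) / n ≤ (2 * (C + ε) + 3) / n := by gcongr
  linarith

lemma energy_ev {L τ : ℝ} (hL : 0 < L) (hτ : τ ∈ Icc (0:ℝ) 1) {nseq k : ℕ → ℕ}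
    (hn : Tendsto nseq atTop atTop)
    (htau : Tendsto (fun m => tauSeq L (nseq m)) atTop (nhds τ)) {v : ℝ → ℝ} {a b C : ℝ}
    (ha1 : a ≤ 1)
    (hC : C = 2 * (volume {x ∈ Ioo 0 L | 0 < v x ∧ v x < 1}).toReal +
        (eVariationOn v (Ioo 0 L)).toReal) {w : ℕ → ℕ → ℕ}
    (hg : ∀ ε > 0, ∀ᶠ m in atTop, Good L v a b (nseq m) (k m) ε (w m)) {δ : ℝ} (hδ : 0 < δ) :
    ∀ᶠ m in atTop, energyPer L (nseq m) (UU (nseq m) ⌊L * (nseq m:ℝ)^2⌋₊ (w m)) ≤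
      C + phi τ a b + δ := by
  have hpos : ∀ᶠ m in atTop, 0 < nseq m := hn.eventually_gt_atTop 0
  have hlim := phi_limit (n := nseq) (t := fun m => ⌊L * (nseq m:ℝ)^2⌋₊ - nseq m * ⌊L * (nseq m:ℝ)⌋₊)
    (w0 := fun m => w m 0) (W1 := fun m => w m (⌊L * (nseq m:ℝ)⌋₊ - 1))
    (W2 := fun m => w m ⌊L * (nseq m:ℝ)⌋₊) (τ := τ) (a := a) (b := b) hτ ha1 hn
    (by
      refine htau.congr' ?_
      filter_upwards [hpos] with m hm
      obtain ⟨t1, t2⟩ := t_bounds hL hm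
      unfold tauSeq
      rw [Nat.cast_sub t1]; push_cast; rfl)
    (by
      filter_upwards [hpos] with m hm
      exact (t_bounds hL hm).2)
    (div_tendsto_of_good hn fun ε hε => (hg ε hε).mono fun m h => h.2.2.2.1)
    (div_tendsto_of_good hn fun ε hε => (hg ε hε).mono fun m h => h.2.2.2.2.1)
    (div_tendsto_of_good hn fun ε hε => (hg ε hε).mono fun m h => h.2.2.2.2.2.1)
  have hinv := ((inv_tendsto (2 * (C + δ / 4) + 3)).comp hn).eventually
    (gt_mem_nhds (show 0 < δ / 4 by positivity))
  have hph := hlim.eventually (gt_mem_nhds (show phi τ a b < phi τ a b + δ / 4 by linarith))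
  filter_upwards [hpos, hn.eventually (R_large hL 2), hinv, hph, hg (δ/4) (by positivity)] with
    m hm hR hinv hph hG
  simp only [Function.comp_def] at hinv
  have := energy_good hL hm hR hC hG
  linarith

lemma weak_star {L : ℝ} (hL : 0 < L) {v : ℝ → ℝ} (hrange : ∀ x ∈ Ioo 0 L, 0 ≤ v x ∧ v x ≤ 1)
    (hbv : BoundedVariationOn v (Ioo 0 L))
    {a b : ℝ} {n k : ℕ → ℕ} (hn : Tendsto n atTop atTop) (w : ℕ → ℕ → ℕ)
    (hg : ∀ ε > 0, ∀ᶠ m in atTop, Good L v a b (n m) (k m) ε (w m)) (g : ℝ → ℝ)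
    (hgi : IntegrableOn g (Ioo 0 L)) :
    Tendsto (fun m => ∫ x in Ioo 0 L, stepFun (n m) (UU (n m) ⌊L * (n m:ℝ)^2⌋₊ (w m)) x * g x)
      atTop (nhds (∫ x in Ioo 0 L, v x * g x)) := by
  have h1 := weak_diff hL hrange hn w hg g hgi
  have hev : ∀ᶠ m in atTop, 0 < n m ∧ 1 ≤ ⌊L * (n m:ℝ)⌋₊ :=
    (hn.eventually_gt_atTop 0).and (hn.eventually (R_large hL 1))
  have h2 : Tendsto (fun m => ∫ x in Ioo 0 L, vs L v (n m) ⌊(n m:ℝ) * x⌋₊ * g x) atTop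
      (nhds (∫ x in Ioo 0 L, v x * g x)) := by
    refine tendsto_integral_filter_of_dominated_convergence (fun x => ‖g x‖) ?_ ?_ hgi.norm ?_
    · exact Eventually.of_forall fun m => (vs_meas L v (n m)).aestronglyMeasurable.mul hgi.1
    · filter_upwards [hev] with m hm
      filter_upwards with x
      have := vs_range hL hrange hm.1 hm.2 ⌊(n m:ℝ) * x⌋₊
      rw [norm_mul, Real.norm_eq_abs, abs_of_nonneg this.1]
      exact mul_le_of_le_one_left (norm_nonneg _) this.2
    · filter_upwards [vs_ae hL hbv] with x hx
      exact (hx.comp hn).mul_const _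
  have h3 := h1.add h2
  rw [zero_add] at h3
  refine h3.congr' ?_
  filter_upwards [hev] with m hm
  have vr := vs_range hL hrange hm.1 hm.2
  have hUm := stepFun_meas (n m) (UU (n m) ⌊L * (n m:ℝ)^2⌋₊ (w m))
  have hVm := vs_meas L v (n m)
  have iU : IntegrableOn (fun x => stepFun (n m) (UU (n m) ⌊L * (n m:ℝ)^2⌋₊ (w m)) x * g x) (Ioo 0 L) :=
    hgi.bdd_mul (c := 1) hUm.aestronglyMeasurable (Eventually.of_forall fun x => by
      have h : 0 ≤ stepFun (n m) (UU (n m) ⌊L * (n m:ℝ)^2⌋₊ (w m)) x ∧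
        stepFun (n m) (UU (n m) ⌊L * (n m:ℝ)^2⌋₊ (w m)) x ≤ 1 := UU_01 _ _ _ _
      rw [Real.norm_eq_abs, abs_of_nonneg h.1]; exact h.2)
  have iV : IntegrableOn (fun x => vs L v (n m) ⌊(n m:ℝ) * x⌋₊ * g x) (Ioo 0 L) :=
    hgi.bdd_mul (c := 1) hVm.aestronglyMeasurable (Eventually.of_forall fun x => by
      rw [Real.norm_eq_abs, abs_of_nonneg (vr _).1]; exact (vr _).2)
  simp only [sub_mul]
  rw [integral_sub iU iV]
  ring


/-- Upper bound (recovery sequence) for the periodic spin energy. -/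
theorem periodic_limsup_upper_bound
    (L σ τ : ℝ) (hL : 0 < L) (hσ : σ ∈ Set.Ioo (0 : ℝ) 1) (hτ : τ ∈ Set.Icc (0 : ℝ) 1)
    (nseq : ℕ → ℕ) (hmono : StrictMono nseq)
    (htau : Tendsto (fun m => tauSeq L (nseq m)) atTop (nhds τ))
    (k : ℕ → ℕ) (hk : ∀ m, k m ≤ Nat.floor (L * (nseq m : ℝ) ^ 2))
    (hklim : Tendsto (fun m => (k m : ℝ) / (L * (nseq m : ℝ) ^ 2)) atTop (nhds σ))
    (v : ℝ → ℝ)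
    (hrange : ∀ x ∈ Set.Ioo 0 L, 0 ≤ v x ∧ v x ≤ 1)
    (hbv : BoundedVariationOn v (Set.Ioo 0 L))
    (hint : (∫ x in Set.Ioo 0 L, v x) = σ * L)
    (a b : ℝ)
    (ha : Tendsto v (nhdsWithin 0 (Set.Ioo 0 L)) (nhds a))
    (hb : Tendsto v (nhdsWithin L (Set.Ioo 0 L)) (nhds b)) :
    ∃ u : ℕ → ℕ → ℝ,
      (∀ m, AdmDisc L (nseq m) (k m) (u m)) ∧
      WeakStarTo (Set.Ioo 0 L) (fun m => stepFun (nseq m) (u m)) v ∧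
      Filter.limsup (fun m => ENNReal.ofReal (energyPer L (nseq m) (u m))) atTop ≤
        2 * volume {x ∈ Set.Ioo 0 L | 0 < v x ∧ v x < 1} + eVariationOn v (Set.Ioo 0 L) +
          ENNReal.ofReal (phi τ a b) := by
  have hn : Tendsto nseq atTop atTop := hmono.tendsto_atTop
  obtain ⟨W, hW⟩ := exists_good hL hσ hn hklim hrange hbv hint ha hb
  have ha1 : a ≤ 1 := by
    refine le_of_tendsto (vs_zero hL ha) ?_
    filter_upwards [R_large hL 1, eventually_gt_atTop 0] with n hR hn
    exact (vs_range hL hrange hn hR 0).2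
  have hadm : ∀ᶠ m in atTop, AdmDisc L (nseq m) (k m)
      (UU (nseq m) ⌊L * (nseq m:ℝ)^2⌋₊ (W m)) := by
    filter_upwards [hW 1 one_pos, hn.eventually_gt_atTop 0] with m hm hp
    exact adm_of_good hL hp hm
  set u : ℕ → ℕ → ℝ := fun m =>
    if AdmDisc L (nseq m) (k m) (UU (nseq m) ⌊L * (nseq m:ℝ)^2⌋₊ (W m)) then
      UU (nseq m) ⌊L * (nseq m:ℝ)^2⌋₊ (W m)
    else fun i => if 1 ≤ i ∧ i ≤ k m then 1 else 0 with hu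
  have hueq : ∀ᶠ m in atTop, u m = UU (nseq m) ⌊L * (nseq m:ℝ)^2⌋₊ (W m) := by
    filter_upwards [hadm] with m hm
    exact if_pos hm
  refine ⟨u, ?_, ?_, ?_⟩
  · intro m
    by_cases h : AdmDisc L (nseq m) (k m) (UU (nseq m) ⌊L * (nseq m:ℝ)^2⌋₊ (W m))
    · simp only [hu, if_pos h]; exact h
    · simp only [hu, if_neg h]; exact adm_default (hk m)
  · intro g hgi
    refine (weak_star hL hrange hbv hn W hW g hgi).congr' ?_
    filter_upwards [hueq] with m hm
    rw [hm]
  · set S := volume {x ∈ Set.Ioo 0 L | 0 < v x ∧ v x < 1} with hS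
    have hSfin : S ≠ ⊤ := by
      refine ne_top_of_le_ne_top (b := volume (Set.Ioo 0 L)) (by simp) (measure_mono ?_)
      exact fun x hx => hx.1
    have hphi : 0 ≤ phi τ a b := ENNReal.toReal_nonneg
    set C := 2 * S.toReal + (eVariationOn v (Ioo 0 L)).toReal with hC
    have hC0 : 0 ≤ C := by positivity
    have hR : 2 * S + eVariationOn v (Ioo 0 L) + ENNReal.ofReal (phi τ a b) =
        ENNReal.ofReal (C + phi τ a b) := by
      rw [ENNReal.ofReal_add hC0 hphi, hC,
        ENNReal.ofReal_add (by positivity) ENNReal.toReal_nonneg, ENNReal.ofReal_toReal hbv,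
        ENNReal.ofReal_mul (by norm_num), ENNReal.ofReal_toReal hSfin]
      simp
    rw [hR]
    refine ENNReal.le_of_forall_pos_le_add ?_
    intro δ hδ _
    refine limsup_le_of_le (by isBoundedDefault) ?_
    filter_upwards [hueq, energy_ev hL hτ hn htau ha1 hC hW (δ := (δ:ℝ)) (by exact_mod_cast hδ)]
      with m h1 h2
    rw [h1]
    refine (ENNReal.ofReal_le_ofReal h2).trans ?_
    rw [ENNReal.ofReal_add (by positivity) (by positivity), ENNReal.ofReal_coe_nnreal]
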